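/- Let (q,r) be a Strichartz pair, i.e. 2/q + 1/r = 1/2 with 4 ≤ q ≤ ∞. Then every solution u of the Airy equation with initial data u₀ satisfies ‖u‖_{L^q_t L^r_x(ℝ×ℝ)} ≲ ‖|D|^{-1/q} u₀‖_{L²(ℝ)}, where |D|^α is the Fourier multiplier with symbol |ξ|^α. -/

import Mathlib

open MeasureTheory Set Filter
open scoped ENNReal

noncomputable section

namespace KdVPaper

/-- Spatial Fourier transform, with the convention `f̂(ξ) = ∫ e^{-i x ξ} f(x) dx`,
so that the Airy propagator is the Fourier multiplier with symbol `e^{i t ξ³}`. -/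
def ftx (f : ℝ → ℂ) (ξ : ℝ) : ℂ :=
  ∫ x : ℝ, Complex.exp (-(Complex.I * ((x * ξ : ℝ) : ℂ))) * f x

/-- Inverse spatial Fourier transform. -/
def iftx (g : ℝ → ℂ) (x : ℝ) : ℂ :=
  (2 * Real.pi)⁻¹ • ∫ ξ : ℝ, Complex.exp (Complex.I * ((x * ξ : ℝ) : ℂ)) * g ξ

/-- Space-time Fourier transform `ũ(τ, ξ)`. -/
def ftxt (u : ℝ → ℝ → ℂ) (τ ξ : ℝ) : ℂ :=
  ∫ t : ℝ, Complex.exp (-(Complex.I * ((t * τ : ℝ) : ℂ))) * ftx (u t) ξ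

/-- Inverse space-time Fourier transform. -/
def iftxt (F : ℝ → ℝ → ℂ) (t x : ℝ) : ℂ :=
  (2 * Real.pi)⁻¹ • ∫ τ : ℝ, Complex.exp (Complex.I * ((t * τ : ℝ) : ℂ)) * iftx (F τ) x

/-- `L²` norm in the space variable. -/
def L2x (f : ℝ → ℂ) : ℝ≥0∞ := eLpNorm f 2 volume

/-- `L²` norm in space-time. -/
def L2xt (u : ℝ → ℝ → ℂ) : ℝ≥0∞ := eLpNorm (fun p : ℝ × ℝ => u p.1 p.2) 2 volume

/-- `L^p` norm in space-time, with the time variable restricted to a set `I`. -/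
def LpI (p : ℝ≥0∞) (I : Set ℝ) (u : ℝ → ℝ → ℂ) : ℝ≥0∞ :=
  eLpNorm (fun q : ℝ × ℝ => u q.1 q.2) p
    ((volume : Measure (ℝ × ℝ)).restrict (I ×ˢ (univ : Set ℝ)))

/-- `L²` norm in space-time, with the time variable restricted to a set `I`. -/
def L2I (I : Set ℝ) (u : ℝ → ℝ → ℂ) : ℝ≥0∞ := LpI 2 I u

/-- Mixed norm `L^q_t L^r_x`. -/
def LqtLrx (q r : ℝ≥0∞) (u : ℝ → ℝ → ℂ) : ℝ≥0∞ :=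
  eLpNorm (fun t => (eLpNorm (u t) r volume).toReal) q volume

/-- Mixed norm `L^r_x L^q_t`. -/
def LrxLqt (r q : ℝ≥0∞) (u : ℝ → ℝ → ℂ) : ℝ≥0∞ :=
  eLpNorm (fun x => (eLpNorm (fun t => u t x) q volume).toReal) r volume

/-- Sobolev norm `‖f‖_{H^s} = ‖(1+ξ²)^{s/2} f̂‖_{L²}`. -/
def HsNorm (s : ℝ) (f : ℝ → ℂ) : ℝ≥0∞ :=
  (∫⁻ ξ : ℝ, (‖ftx f ξ‖₊ : ℝ≥0∞) ^ 2 * ENNReal.ofReal ((1 + ξ ^ 2) ^ s)) ^ (1/2 : ℝ)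

/-- Sobolev norm of a real-valued function. -/
def HsNormR (s : ℝ) (f : ℝ → ℝ) : ℝ≥0∞ := HsNorm s (fun x => (f x : ℂ))

/-- The dyadic number `λ = 2^n ≥ 1`. -/
def dy (n : ℕ) : ℝ := 2 ^ n

/-- Dyadic annulus: all frequencies `≤ 1` are included in the first piece. -/
def ann (n : ℕ) : Set ℝ :=
  if n = 0 then {ξ : ℝ | |ξ| ≤ 1} else {ξ : ℝ | dy (n - 1) < |ξ| ∧ |ξ| ≤ dy n}

/-- A fattened annulus `{|ξ| ≈ 2^n}`. -/
def annAt (n : ℕ) : Set ℝ := {ξ : ℝ | dy n / 2 ≤ |ξ| ∧ |ξ| ≤ 2 * dy n}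

/-- Sharp Fourier projection onto a set of frequencies. -/
def PxSet (A : Set ℝ) (f : ℝ → ℂ) : ℝ → ℂ := iftx (A.indicator (ftx f))

/-- Littlewood–Paley projection `P_λ`, `λ = 2^n`. -/
def Px (n : ℕ) (f : ℝ → ℂ) : ℝ → ℂ := PxSet (ann n) f

/-- Littlewood–Paley projection acting on space-time functions. -/
def Pt (n : ℕ) (u : ℝ → ℝ → ℂ) : ℝ → ℝ → ℂ := fun t => Px n (u t)

/-- `f` has spatial Fourier support in `A`. -/
def suppIn (A : Set ℝ) (f : ℝ → ℂ) : Prop := ∀ ξ : ℝ, ξ ∉ A → ftx f ξ = 0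

/-- Modulation projection `Q_A`, restricting `τ - ξ³` to the set `A`. -/
def Qm (A : Set ℝ) (u : ℝ → ℝ → ℂ) : ℝ → ℝ → ℂ :=
  iftxt (fun τ ξ => A.indicator (fun _ => ftxt u τ ξ) (τ - ξ ^ 3))

/-- The linear (Airy) part of the KdV operator, `(∂_t + ∂³_x) u`. -/
def airyOp (u : ℝ → ℝ → ℂ) : ℝ → ℝ → ℂ :=
  fun t x => deriv (fun t' => u t' x) t + iteratedDeriv 3 (u t) x

/-- Sharp time cutoff `η_{[a,b]} u`. -/
def tcut (a b : ℝ) (u : ℝ → ℝ → ℂ) : ℝ → ℝ → ℂ :=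
  fun t x => (Icc a b).indicator (fun _ => u t x) t

/-- The `X^{0,1}[I]` norm on `I = [a,b]`:
`‖φ‖² = ‖φ(a)‖_{L²}² + |I| ‖(∂_t+∂³_x)φ‖²_{L²(I×ℝ)}`. -/
def X01Norm (a b : ℝ) (φ : ℝ → ℝ → ℂ) : ℝ≥0∞ :=
  ((eLpNorm (φ a) 2 volume) ^ 2
    + ENNReal.ofReal (b - a) * (L2I (Icc a b) (airyOp φ)) ^ 2) ^ (1/2 : ℝ)

/-- The `X¹[I]` norm: `‖φ‖² = Σ_λ λ^{2s} ‖P_λ φ‖²_{X^{0,1}[I]}`. -/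
def X1Norm (s a b : ℝ) (φ : ℝ → ℝ → ℂ) : ℝ≥0∞ :=
  (∑' n : ℕ, ENNReal.ofReal (dy n ^ (2 * s)) * (X01Norm a b (Pt n φ)) ^ 2) ^ (1/2 : ℝ)

/-- The `X¹[I]` norm of a single dyadic piece at frequency `2^n`:
`‖u_λ‖_{X¹[I]} = λ^s ‖u_λ‖_{X^{0,1}[I]}`. -/
def X1dyadic (s : ℝ) (n : ℕ) (a b : ℝ) (u : ℝ → ℝ → ℂ) : ℝ≥0∞ :=
  ENNReal.ofReal (dy n ^ s) * X01Norm a b u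

/-- The Bourgain norm `X^{α,β}` adapted to the curve `τ = c ξ³`. -/
def XabNorm (c α β : ℝ) (u : ℝ → ℝ → ℂ) : ℝ≥0∞ :=
  (∫⁻ τ : ℝ, ∫⁻ ξ : ℝ, (‖ftxt u τ ξ‖₊ : ℝ≥0∞) ^ 2
      * ENNReal.ofReal ((1 + ξ ^ 2) ^ α * (1 + (τ - c * ξ ^ 3) ^ 2) ^ β)) ^ (1/2 : ℝ)

/-- The length `λ^{4s+3}` of the small frequency-dependent time intervals. -/
def ilen (s : ℝ) (n : ℕ) : ℝ := dy n ^ (4 * s + 3)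

/-- The solution of the Airy equation `∂_t u + ∂³_x u = 0` with data `u₀`:
the Fourier multiplier with symbol `e^{i t ξ³}` applied to `u₀`. -/
def airySol (u₀ : ℝ → ℂ) : ℝ → ℝ → ℂ :=
  fun t => iftx (fun ξ => Complex.exp (Complex.I * ((t * ξ ^ 3 : ℝ) : ℂ)) * ftx u₀ ξ)

/-- The fractional derivative `|D|^α`, the Fourier multiplier with symbol `|ξ|^α`. -/
def absD (α : ℝ) (f : ℝ → ℂ) : ℝ → ℂ :=
  iftx (fun ξ => ((|ξ| ^ α : ℝ) : ℂ) * ftx f ξ)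



open FourierTransform in
lemma fourier_toLp_ae (h : ℝ → ℂ) (h1 : Integrable h) (h2 : MemLp h 2) :
    (𝓕 (h2.toLp h) : Lp ℂ 2 (volume : Measure ℝ)) =ᵐ[volume] (𝓕 h : ℝ → ℂ) := by
  have hcont : Continuous (𝓕 h : ℝ → ℂ) :=
    VectorFourier.fourierIntegral_continuous Real.continuous_fourierChar
      (by exact continuous_inner) h1
  apply ae_eq_of_integral_contDiff_smul_eq
  · exact (Lp.memLp _).locallyIntegrable (by norm_num)
  · exact hcont.locallyIntegrable
  · intro g g_smooth g_cpt
    have hg₁ : HasCompactSupport (Complex.ofRealCLM ∘ g) := g_cpt.comp_left rfl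
    have hg₂ : ContDiff ℝ (↑(⊤ : ℕ∞)) (Complex.ofRealCLM ∘ g) := by fun_prop
    set G := hg₁.toSchwartzMap hg₂ with hG
    have e1 : ∫ x, g x • (𝓕 (h2.toLp h) : Lp ℂ 2 (volume : Measure ℝ)) x =
        Lp.toTemperedDistribution (𝓕 (h2.toLp h) : Lp ℂ 2 (volume : Measure ℝ)) G := by
      simp [hG]
    rw [e1, ← Lp.fourier_toTemperedDistribution_eq, TemperedDistribution.fourier_apply,
      Lp.toTemperedDistribution_apply]
    have e2 : ∫ x, (𝓕 G) x • (h2.toLp h) x = ∫ x, (𝓕 G) x • h x := by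
      apply integral_congr_ae
      filter_upwards [h2.coeFn_toLp] with x hx
      rw [hx]
    rw [e2]
    have e3 := VectorFourier.integral_fourierIntegral_smul_eq_flip (L := innerₗ ℝ)
      (μ := (volume : Measure ℝ)) (ν := (volume : Measure ℝ))
      Real.continuous_fourierChar (by exact continuous_inner) (G.integrable) h1
    have e4 : ∀ x, (𝓕 G) x = VectorFourier.fourierIntegral Real.fourierChar volume (innerₗ ℝ) G x := by
      intro x; rw [SchwartzMap.fourier_coe]; rfl
    simp_rw [e4]
    rw [e3]
    apply integral_congr_ae
    filter_upwards with x
    have : VectorFourier.fourierIntegral Real.fourierChar volume (innerₗ ℝ).flip h x = 𝓕 h x := by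
      rw [flip_innerₗ]; rfl
    rw [this]
    simp [hG]

open FourierTransform in
lemma plancherel_fourier (h : ℝ → ℂ) (h1 : Integrable h) (h2 : MemLp h 2) :
    eLpNorm (𝓕 h : ℝ → ℂ) 2 volume = eLpNorm h 2 volume := by
  rw [← eLpNorm_congr_ae (fourier_toLp_ae h h1 h2), ← Lp.enorm_def,
    ← eLpNorm_congr_ae h2.coeFn_toLp, ← Lp.enorm_def, enorm_eq_iff_norm_eq, Lp.norm_fourier_eq]

open FourierTransform in
lemma iftx_eq_fourier (h : ℝ → ℂ) (x : ℝ) :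
    iftx h x = (2 * Real.pi)⁻¹ • (𝓕 h : ℝ → ℂ) (-(2 * Real.pi)⁻¹ * x) := by
  unfold iftx
  rw [Real.fourier_real_eq]
  congr 1
  apply integral_congr_ae
  filter_upwards with v
  rw [Circle.smul_def, Real.fourierChar_apply, smul_eq_mul]
  congr 2
  push_cast
  have : (Real.pi : ℂ) ≠ 0 := by exact_mod_cast Real.pi_ne_zero
  field_simp

lemma plancherel (h : ℝ → ℂ) (h1 : Integrable h) (h2 : MemLp h 2) :
    eLpNorm (iftx h) 2 volume = ENNReal.ofReal ((2 * Real.pi) ^ (-(1/2) : ℝ)) * eLpNorm h 2 volume := by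
  have hpi : (0:ℝ) < 2 * Real.pi := by positivity
  have e : iftx h = (2 * Real.pi)⁻¹ • ((FourierTransform.fourier h : ℝ → ℂ) ∘ fun x => -(2 * Real.pi)⁻¹ * x) := by
    ext x; simpa using! iftx_eq_fourier h x
  have hcont : Continuous (FourierTransform.fourier h : ℝ → ℂ) :=
    VectorFourier.fourierIntegral_continuous Real.continuous_fourierChar
      (by exact continuous_inner) h1
  have hne : -(2 * Real.pi)⁻¹ ≠ 0 := by
    have := inv_pos.2 hpi
    linarith
  rw [e, eLpNorm_const_smul, ← eLpNorm_map_measure (μ := volume)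
    (hcont.aestronglyMeasurable) (by fun_prop), Real.map_volume_mul_left hne,
    eLpNorm_smul_measure_of_ne_top (by norm_num), plancherel_fourier h h1 h2, smul_eq_mul, ← mul_assoc]
  congr 1
  rw [Real.enorm_eq_ofReal (by positivity), inv_neg, inv_inv, abs_neg, abs_of_pos hpi,
    ENNReal.ofReal_rpow_of_nonneg hpi.le (by simp), ← ENNReal.ofReal_mul (by positivity)]
  congr 1
  rw [← Real.rpow_neg_one, ← Real.rpow_add hpi]
  norm_num


lemma vdc {a b : ℝ} (hab : a ≤ b) (P P' g g' k k' ψ : ℝ → ℝ)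
    (hP : ∀ x ∈ Icc a b, HasDerivAt P (P' x) x)
    (hg : ∀ x ∈ Icc a b, HasDerivAt g (g' x) x)
    (hk : ∀ x ∈ Icc a b, HasDerivAt k (k' x) x)
    (hψ : ∀ x ∈ Icc a b, ψ x = g x * P' x)
    (hψc : Continuous ψ) (hPc : Continuous P)
    (hle : ∀ x ∈ Icc a b, |g' x| ≤ k' x) :
    ‖∫ x in a..b, (ψ x : ℂ) * Complex.exp (Complex.I * (P x : ℂ))‖
      ≤ |g a| + |g b| + (k b - k a) := by
  set f : ℝ → ℂ := fun x => (ψ x : ℂ) * Complex.exp (Complex.I * (P x : ℂ)) with hf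
  have hfc : Continuous f := by fun_prop
  set H : ℝ → ℂ := fun y => (g y : ℂ) * Complex.exp (Complex.I * (P y : ℂ))
    - Complex.I * ∫ x in a..y, f x with hH
  have hHd : ∀ x ∈ Icc a b, HasDerivAt H ((g' x : ℂ) * Complex.exp (Complex.I * (P x : ℂ))) x := by
    intro x hx
    have h1 := (hg x hx).ofReal_comp
    have h2 := (((hP x hx).ofReal_comp).const_mul Complex.I).cexp
    have h3 := (hfc.integral_hasStrictDerivAt a x).hasDerivAt.const_mul Complex.I
    refine ((h1.mul h2).sub h3).congr_deriv ?_
    simp only [hf]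
    rw [hψ x hx]
    push_cast
    ring
  have key : ∀ x ∈ Icc a b, ‖H x - H a‖ ≤ k x - k a := by
    have := image_norm_le_of_norm_deriv_right_le_deriv_boundary'
      (f := fun x => H x - H a) (f' := fun x => (g' x : ℂ) * Complex.exp (Complex.I * (P x : ℂ)))
      (a := a) (b := b) (B := fun x => k x - k a) (B' := k')
      (fun x hx => ((hHd x hx).sub_const _).continuousAt.continuousWithinAt)
      (fun x hx => ((hHd x (Ico_subset_Icc_self hx)).sub_const _).hasDerivWithinAt)
      (by simp) 
      (fun x hx => ((hk x hx).sub_const _).continuousAt.continuousWithinAt)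
      (fun x hx => ((hk x (Ico_subset_Icc_self hx)).sub_const _).hasDerivWithinAt)
      (by
        intro x hx
        have hx' := Ico_subset_Icc_self hx
        rw [norm_mul, mul_comm Complex.I, Complex.norm_exp_ofReal_mul_I, mul_one, Complex.norm_real]
        exact hle x hx')
    exact fun x hx => this hx
  have hb := key b ⟨hab, le_rfl⟩
  have e : Complex.I * ∫ x in a..b, f x = (g b : ℂ) * Complex.exp (Complex.I * (P b : ℂ))
      - (g a : ℂ) * Complex.exp (Complex.I * (P a : ℂ)) - (H b - H a) := by
    simp [hH]
  have e' : ‖∫ x in a..b, f x‖ = ‖Complex.I * ∫ x in a..b, f x‖ := by simp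
  rw [e', e]
  have n1 : ∀ y : ℝ, ‖(g y : ℂ) * Complex.exp (Complex.I * (P y : ℂ))‖ = |g y| := by
    intro y
    rw [norm_mul, mul_comm Complex.I, Complex.norm_exp_ofReal_mul_I, mul_one, Complex.norm_real]
    rfl
  refine (norm_sub_le _ _).trans ?_
  have := norm_sub_le ((g b : ℂ) * Complex.exp (Complex.I * (P b : ℂ)))
    ((g a : ℂ) * Complex.exp (Complex.I * (P a : ℂ)))
  rw [n1, n1] at this
  linarith

/-- The integrand. -/
def osc (x ξ : ℝ) : ℂ := (Real.sqrt ξ : ℂ) * Complex.exp (Complex.I * ((ξ ^ 3 + 3 * x * ξ : ℝ) : ℂ))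

lemma osc_cont (x : ℝ) : Continuous (osc x) := by unfold osc; fun_prop

lemma norm_osc (x ξ : ℝ) : ‖osc x ξ‖ = Real.sqrt ξ := by
  unfold osc
  rw [norm_mul, mul_comm Complex.I, Complex.norm_exp_ofReal_mul_I, mul_one, Complex.norm_real,
    Real.norm_of_nonneg (Real.sqrt_nonneg _)]

lemma osc_triv (x : ℝ) {a b s : ℝ} (hab : a ≤ b) (hs : 0 ≤ s) (hb : b ≤ s ^ 2) :
    ‖∫ ξ in a..b, osc x ξ‖ ≤ s * (b - a) := by
  rw [← abs_of_nonneg (sub_nonneg.2 hab)]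
  apply intervalIntegral.norm_integral_le_of_norm_le_const
  intro ξ hξ
  rw [uIoc_of_le hab] at hξ
  rw [norm_osc]
  exact Real.sqrt_le_iff.2 ⟨hs, hξ.2.trans hb⟩

lemma osc_vdc (x : ℝ) {a b : ℝ} (ha : 0 < a) (hab : a ≤ b) (k k' : ℝ → ℝ)
    (hne : ∀ ξ ∈ Icc a b, ξ ^ 2 + x ≠ 0)
    (hk : ∀ ξ ∈ Icc a b, HasDerivAt k (k' ξ) ξ)
    (hle : ∀ ξ ∈ Icc a b, |(1 / (2 * Real.sqrt ξ) * (3 * (ξ ^ 2 + x)) - Real.sqrt ξ * (6 * ξ))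
      / (3 * (ξ ^ 2 + x)) ^ 2| ≤ k' ξ) :
    ‖∫ ξ in a..b, osc x ξ‖ ≤ |Real.sqrt a / (3 * (a ^ 2 + x))| + |Real.sqrt b / (3 * (b ^ 2 + x))|
      + (k b - k a) := by
  refine vdc hab (fun ξ => ξ ^ 3 + 3 * x * ξ) (fun ξ => 3 * (ξ ^ 2 + x))
    (fun ξ => Real.sqrt ξ / (3 * (ξ ^ 2 + x))) _ k k' (fun ξ => Real.sqrt ξ) ?_ ?_ hk ?_
    (by fun_prop) (by fun_prop) hle
  · intro ξ hξ
    refine (((hasDerivAt_id ξ).pow 3).add ((hasDerivAt_id ξ).const_mul (3 * x))).congr_deriv ?_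
    simp; ring
  · intro ξ hξ
    have h0 : 0 < ξ := ha.trans_le hξ.1
    have h1 : HasDerivAt (fun ξ : ℝ => 3 * (ξ ^ 2 + x)) (6 * ξ) ξ := by
      refine ((((hasDerivAt_id ξ).pow 2).add_const x).const_mul 3).congr_deriv ?_
      simp; ring
    exact (Real.hasDerivAt_sqrt h0.ne').div h1 (mul_ne_zero (by norm_num) (hne ξ hξ))
  · intro ξ hξ
    have := hne ξ hξ
    field_simp


lemma osc_neg (x : ℝ) (hx : x ≤ 0) {a b : ℝ} (ha : 0 < a) (hab : a ≤ b)
    (hne : ∀ ξ ∈ Icc a b, ξ ^ 2 + x ≠ 0) :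
    ‖∫ ξ in a..b, osc x ξ‖ ≤ |Real.sqrt a / (3 * (a ^ 2 + x))| + |Real.sqrt b / (3 * (b ^ 2 + x))|
      + (- (Real.sqrt b / (3 * (b ^ 2 + x))) - - (Real.sqrt a / (3 * (a ^ 2 + x)))) := by
  refine osc_vdc x ha hab (fun ξ => - (Real.sqrt ξ / (3 * (ξ ^ 2 + x)))) 
    (fun ξ => - ((1 / (2 * Real.sqrt ξ) * (3 * (ξ ^ 2 + x)) - Real.sqrt ξ * (6 * ξ))
      / (3 * (ξ ^ 2 + x)) ^ 2)) hne ?_ ?_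
  · intro ξ hξ
    have h0 : 0 < ξ := ha.trans_le hξ.1
    have h1 : HasDerivAt (fun ξ : ℝ => 3 * (ξ ^ 2 + x)) (6 * ξ) ξ := by
      refine ((((hasDerivAt_id ξ).pow 2).add_const x).const_mul 3).congr_deriv ?_
      simp; ring
    exact ((Real.hasDerivAt_sqrt h0.ne').div h1 (mul_ne_zero (by norm_num) (hne ξ hξ))).neg
  · intro ξ hξ
    have h0 : 0 < ξ := ha.trans_le hξ.1
    apply le_of_eq
    apply abs_of_nonpos
    apply div_nonpos_of_nonpos_of_nonneg _ (by positivity)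
    have hs : 0 < Real.sqrt ξ := Real.sqrt_pos.2 h0
    have hs2 : Real.sqrt ξ * Real.sqrt ξ = ξ := Real.mul_self_sqrt h0.le
    have : 1 / (2 * Real.sqrt ξ) * (3 * (ξ ^ 2 + x)) - Real.sqrt ξ * (6 * ξ)
      = (3 * (x - 3 * ξ ^ 2)) / (2 * Real.sqrt ξ) := by
      field_simp
      nlinarith
    rw [this]
    apply div_nonpos_of_nonpos_of_nonneg _ (by positivity)
    nlinarith [sq_nonneg ξ]

lemma osc_right (x : ℝ) (hx : x ≤ 0) {a b : ℝ} (ha : 0 < a) (hab : a ≤ b) (h : 0 < a ^ 2 + x) :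
    ‖∫ ξ in a..b, osc x ξ‖ ≤ 2 * (Real.sqrt a / (3 * (a ^ 2 + x))) := by
  have hp : ∀ ξ ∈ Icc a b, 0 < ξ ^ 2 + x := fun ξ hξ => by nlinarith [hξ.1]
  refine (osc_neg x hx ha hab (fun ξ hξ => (hp ξ hξ).ne')).trans ?_
  have hb := hp b ⟨hab, le_rfl⟩
  rw [abs_of_nonneg (by positivity), abs_of_nonneg (by positivity)]
  linarith

lemma osc_left (x : ℝ) (hx : x ≤ 0) {a b : ℝ} (ha : 0 < a) (hab : a ≤ b) (h : b ^ 2 + x < 0) :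
    ‖∫ ξ in a..b, osc x ξ‖ ≤ 2 * (Real.sqrt b / (3 * (- (b ^ 2 + x)))) := by
  have hp : ∀ ξ ∈ Icc a b, ξ ^ 2 + x < 0 := fun ξ hξ => by nlinarith [hξ.1, hξ.2]
  refine (osc_neg x hx ha hab (fun ξ hξ => (hp ξ hξ).ne)).trans ?_
  have hA := hp a ⟨le_rfl, hab⟩
  rw [abs_of_nonpos, abs_of_nonpos, mul_neg, div_neg]
  · linarith
  · exact div_nonpos_of_nonneg_of_nonpos (Real.sqrt_nonneg _) (by linarith)
  · exact div_nonpos_of_nonneg_of_nonpos (Real.sqrt_nonneg _) (by linarith)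

lemma osc_pos (x : ℝ) (hx : 0 ≤ x) {b : ℝ} (hb : 1 ≤ b) :
    ‖∫ ξ in (1:ℝ)..b, osc x ξ‖ ≤ 2 := by
  have hg : ∀ ξ : ℝ, 1 ≤ ξ → |Real.sqrt ξ / (3 * (ξ ^ 2 + x))| ≤ 1 / 3 := by
    intro ξ h
    have : Real.sqrt ξ ≤ ξ ^ 2 := Real.sqrt_le_iff.2 ⟨by positivity, by
      have h2 : (1:ℝ) ≤ ξ^2 := by nlinarith
      nlinarith⟩
    have h2 : 0 < ξ ^ 2 + x := by positivity
    rw [abs_of_nonneg (by positivity), div_le_div_iff₀ (by positivity) (by norm_num)]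
    linarith
  refine (osc_vdc x one_pos hb (fun ξ => - ξ⁻¹) (fun ξ => (ξ ^ 2)⁻¹) ?_ ?_ ?_).trans ?_
  · intro ξ hξ
    have := hξ.1
    positivity
  · intro ξ hξ
    have := hξ.1
    refine (hasDerivAt_inv (by positivity)).neg.congr_deriv (by ring)
  · intro ξ hξ
    have h1 := hξ.1
    have h0 : 0 < ξ := by linarith
    have hs : 0 < Real.sqrt ξ := Real.sqrt_pos.2 h0
    have hs2 : Real.sqrt ξ * Real.sqrt ξ = ξ := Real.mul_self_sqrt h0.le
    have hs1 : 1 ≤ Real.sqrt ξ := Real.one_le_sqrt.2 h1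
    have : 1 / (2 * Real.sqrt ξ) * (3 * (ξ ^ 2 + x)) - Real.sqrt ξ * (6 * ξ)
      = (3 * (x - 3 * ξ ^ 2)) / (2 * Real.sqrt ξ) := by
      field_simp
      nlinarith
    rw [this, abs_div, abs_of_nonneg (by positivity : 0 ≤ (3 * (ξ ^ 2 + x)) ^ 2), abs_div,
      abs_of_pos (by positivity : 0 < 2 * Real.sqrt ξ), div_div, inv_eq_one_div,
      div_le_div_iff₀ (by positivity) (by positivity)]
    have h3 : |3 * (x - 3 * ξ ^ 2)| ≤ 9 * (ξ ^ 2 + x) := by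
      rw [abs_le]; constructor <;> nlinarith [sq_nonneg ξ]
    have h4 : 0 < ξ ^ 2 + x := by positivity
    calc |3 * (x - 3 * ξ ^ 2)| * ξ ^ 2 ≤ 9 * (ξ ^ 2 + x) * (ξ ^ 2 + x) := by
          apply mul_le_mul h3 (by linarith) (by positivity) (by positivity)
      _ ≤ 1 * (2 * Real.sqrt ξ * (3 * (ξ ^ 2 + x)) ^ 2) := by nlinarith [sq_nonneg (ξ ^ 2 + x)]
  · have := hg 1 le_rfl
    have := hg b hb
    have : 0 < b⁻¹ := by positivity
    have h1 : (1:ℝ)⁻¹ = 1 := inv_one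
    simp only [h1] at *
    linarith

lemma osc_split (x : ℝ) (a b c : ℝ) {C D : ℝ} (h1 : ‖∫ ξ in a..b, osc x ξ‖ ≤ C)
    (h2 : ‖∫ ξ in b..c, osc x ξ‖ ≤ D) : ‖∫ ξ in a..c, osc x ξ‖ ≤ C + D := by
  rw [← intervalIntegral.integral_add_adjacent_intervals
    ((osc_cont x).intervalIntegrable a b) ((osc_cont x).intervalIntegrable b c)]
  exact (norm_add_le _ _).trans (add_le_add h1 h2)

lemma osc_bound (x : ℝ) {M : ℝ} (hM : 0 ≤ M) : ‖∫ ξ in (0:ℝ)..M, osc x ξ‖ ≤ 20 := by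
  have t1 : ∀ m, 0 ≤ m → m ≤ 1 → ‖∫ ξ in (0:ℝ)..m, osc x ξ‖ ≤ 1 := by
    intro m h0 h1
    refine (osc_triv x h0 zero_le_one (by linarith)).trans (by linarith)
  rcases le_total 0 x with hx | hx
  · rcases le_total M 1 with h | h
    · linarith [t1 M hM h]
    · linarith [osc_split x 0 1 M (t1 1 zero_le_one le_rfl) (osc_pos x hx h)]
  rcases le_or_gt (-4) x with hx4 | hx4
  · have t4 : ∀ m, 0 ≤ m → m ≤ 4 → ‖∫ ξ in (0:ℝ)..m, osc x ξ‖ ≤ 8 := by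
      intro m h0 h1
      refine (osc_triv x h0 (s := 2) (by norm_num) (by linarith)).trans (by linarith)
    rcases le_total M 4 with h | h
    · linarith [t4 M hM h]
    · have r := osc_right x hx (a := 4) (by norm_num) h (by linarith)
      have hs : Real.sqrt 4 = 2 := by
        rw [show (4:ℝ) = 2 ^ 2 by norm_num]; exact Real.sqrt_sq (by norm_num)
      have r2 : Real.sqrt 4 / (3 * (4 ^ 2 + x)) ≤ 1 := by
        rw [hs, div_le_one (by linarith)]; linarith
      linarith [osc_split x 0 4 M (t4 4 (by norm_num) le_rfl) r]
  · obtain ⟨s, hs0, hs⟩ : ∃ s : ℝ, 0 < s ∧ x = - s ^ 4 := by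
      refine ⟨Real.sqrt (Real.sqrt (-x)), Real.sqrt_pos.2 (Real.sqrt_pos.2 (by linarith)), ?_⟩
      have h1 : Real.sqrt (Real.sqrt (-x)) ^ 2 = Real.sqrt (-x) := Real.sq_sqrt (Real.sqrt_nonneg _)
      have h2 : Real.sqrt (-x) ^ 2 = -x := Real.sq_sqrt (by linarith)
      calc x = - (Real.sqrt (-x) ^ 2) := by rw [h2]; ring
        _ = - ((Real.sqrt (Real.sqrt (-x)) ^ 2) ^ 2) := by rw [h1]
        _ = _ := by ring
    have hs2 : 2 < s ^ 2 := by nlinarith [sq_nonneg (s ^ 2)]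
    have hs1 : 1 < s := by nlinarith
    set d := 1 / s with hd
    have hd0 : 0 < d := by positivity
    have hds : d * s = 1 := by rw [hd]; field_simp
    have hd1 : d < 1 := by rw [hd, div_lt_one hs0]; exact hs1
    have hL : ∀ m, 1 ≤ m → m ≤ s ^ 2 - d → ‖∫ ξ in (1:ℝ)..m, osc x ξ‖ ≤ 1 := by
      intro m h1 h2
      have hm : s ≤ s ^ 4 - m ^ 2 := by
        have : s ^ 4 - m ^ 2 = (s ^ 2 - m) * (s ^ 2 + m) := by ring
        rw [this]
        have : d * (s ^ 2) = s := by rw [sq, ← mul_assoc, hds, one_mul]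
        nlinarith
      refine (osc_left x hx one_pos h1 (by rw [hs]; linarith)).trans ?_
      have hq : Real.sqrt m ≤ s := Real.sqrt_le_iff.2 ⟨hs0.le, by linarith⟩
      have : Real.sqrt m / (3 * (- (m ^ 2 + x))) ≤ 1 / 3 := by
        rw [div_le_div_iff₀ (by rw [hs]; linarith) (by norm_num), hs]; linarith
      linarith
    have hMid : ∀ m, s ^ 2 - d ≤ m → m ≤ s ^ 2 + d → ‖∫ ξ in (s ^ 2 - d)..m, osc x ξ‖ ≤ 4 := by
      intro m h1 h2
      refine (osc_triv x h1 (s := 2 * s) (by positivity) (by nlinarith)).trans ?_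
      nlinarith
    have hR : ∀ m, s ^ 2 + d ≤ m → ‖∫ ξ in (s ^ 2 + d)..m, osc x ξ‖ ≤ 1 := by
      intro m h1
      have hm : 2 * s ≤ (s ^ 2 + d) ^ 2 - s ^ 4 := by
        have : d * (s ^ 2) = s := by rw [sq, ← mul_assoc, hds, one_mul]
        nlinarith [sq_nonneg d]
      refine (osc_right x hx (by positivity) h1 (by rw [hs]; linarith)).trans ?_
      have hq : Real.sqrt (s ^ 2 + d) ≤ 2 * s :=
        Real.sqrt_le_iff.2 ⟨by positivity, by nlinarith⟩
      have : Real.sqrt (s ^ 2 + d) / (3 * ((s ^ 2 + d) ^ 2 + x)) ≤ 1 / 3 := by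
        rw [div_le_div_iff₀ (by rw [hs]; linarith) (by norm_num), hs]; linarith
      linarith
    rcases le_total M 1 with h | h
    · linarith [t1 M hM h]
    rcases le_total M (s ^ 2 - d) with h' | h'
    · linarith [osc_split x 0 1 M (t1 1 zero_le_one le_rfl) (hL M h h')]
    have e2 := osc_split x 0 1 (s ^ 2 - d) (t1 1 zero_le_one le_rfl) (hL _ (by linarith) le_rfl)
    rcases le_total M (s ^ 2 + d) with h'' | h''
    · linarith [osc_split x 0 _ M e2 (hMid M h' h'')]
    have e3 := osc_split x 0 _ (s ^ 2 + d) e2 (hMid _ (by linarith) le_rfl)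
    linarith [osc_split x 0 _ M e3 (hR M h'')]

/-- The phase factor. -/
def ph (t x ξ : ℝ) : ℂ := Complex.exp (Complex.I * ((t * ξ ^ 3 + x * ξ : ℝ) : ℂ))

lemma ph_norm (t x ξ : ℝ) : ‖ph t x ξ‖ = 1 := by
  unfold ph; rw [mul_comm]; exact Complex.norm_exp_ofReal_mul_I _

lemma ph_conj (t x ξ : ℝ) : (starRingEnd ℂ) (ph t x ξ) = ph (-t) (-x) ξ := by
  unfold ph
  rw [← Complex.exp_conj, map_mul, Complex.conj_I, Complex.conj_ofReal]
  congr 1; push_cast; ring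

lemma ph_neg (t x ξ : ℝ) : ph t x (-ξ) = ph (-t) (-x) ξ := by
  unfold ph; congr 3; ring

lemma ph_cont (ξ : ℝ) : Continuous fun p : ℝ × ℝ => ph p.1 p.2 ξ := by unfold ph; fun_prop

lemma half_pos {t : ℝ} (ht : 0 < t) (x : ℝ) {M : ℝ} (hM : 0 ≤ M) :
    ‖∫ ξ in (0:ℝ)..M, (Real.sqrt |ξ| : ℂ) * ph t x ξ‖ ≤ 20 / Real.sqrt t := by
  obtain ⟨c, hc, hct⟩ : ∃ c : ℝ, 0 < c ∧ c ^ 3 = t := by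
    refine ⟨t ^ (1/3 : ℝ), by positivity, ?_⟩
    rw [← Real.rpow_natCast, ← Real.rpow_mul ht.le]; norm_num
  have hsc : 0 < Real.sqrt c := Real.sqrt_pos.2 hc
  have e : (Real.sqrt c : ℂ) * ∫ ξ in (0:ℝ)..M, (Real.sqrt |ξ| : ℂ) * ph t x ξ
      = ∫ ξ in (0:ℝ)..M, osc (x / (3 * c)) (c * ξ) := by
    rw [← intervalIntegral.integral_const_mul]
    apply intervalIntegral.integral_congr
    intro ξ hξ
    rw [uIcc_of_le hM] at hξ
    simp only [osc, ph]
    rw [Real.sqrt_mul hc.le, abs_of_nonneg hξ.1, ← mul_assoc]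
    push_cast
    congr 2
    rw [← hct]
    push_cast
    have : (c : ℂ) ≠ 0 := by exact_mod_cast hc.ne'
    field_simp
  rw [intervalIntegral.integral_comp_mul_left _ hc.ne', mul_zero] at e
  have h := osc_bound (x / (3 * c)) (M := c * M) (by positivity)
  have e2 := congrArg norm e
  rw [norm_mul, norm_smul, Complex.norm_real, Real.norm_of_nonneg hsc.le, norm_inv,
    Real.norm_of_nonneg hc.le] at e2
  have hst : Real.sqrt t = Real.sqrt c * c := by
    rw [← hct, show c ^ 3 = c * c ^ 2 by ring, Real.sqrt_mul hc.le, Real.sqrt_sq hc.le]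
  rw [hst, le_div_iff₀ (by positivity)]
  calc _ = c * (Real.sqrt c * ‖∫ ξ in (0:ℝ)..M, (Real.sqrt |ξ| : ℂ) * ph t x ξ‖) := by ring
    _ = ‖∫ ξ in (0:ℝ)..(c * M), osc (x / (3 * c)) ξ‖ := by rw [e2]; field_simp
    _ ≤ 20 := h

lemma half_bound {t : ℝ} (ht : t ≠ 0) (x : ℝ) {M : ℝ} (hM : 0 ≤ M) :
    ‖∫ ξ in (0:ℝ)..M, (Real.sqrt |ξ| : ℂ) * ph t x ξ‖ ≤ 20 / Real.sqrt |t| := by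
  rcases lt_or_gt_of_ne ht with h | h
  · have := half_pos (neg_pos.2 h) (-x) hM
    rw [abs_of_neg h]
    refine le_trans (le_of_eq ?_) this
    rw [← RCLike.norm_conj]
    congr 1
    rw [intervalIntegral.integral_of_le hM, intervalIntegral.integral_of_le hM, ← integral_conj]
    congr 1
    ext ξ
    rw [map_mul, ph_conj, Complex.conj_ofReal]
  · rw [abs_of_pos h]; exact half_pos h x hM

lemma ker_bound {t : ℝ} (ht : t ≠ 0) (x : ℝ) {M : ℝ} (hM : 0 ≤ M) :
    ‖∫ ξ in Icc (-M) M, (Real.sqrt |ξ| : ℂ) * ph t x ξ‖ ≤ 40 / Real.sqrt |t| := by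
  have hc : ∀ t x : ℝ, Continuous fun ξ : ℝ => (Real.sqrt |ξ| : ℂ) * ph t x ξ := by
    intro t x; unfold ph; fun_prop
  rw [integral_Icc_eq_integral_Ioc, ← intervalIntegral.integral_of_le (by linarith),
    ← intervalIntegral.integral_add_adjacent_intervals
      ((hc t x).intervalIntegrable (-M) 0) ((hc t x).intervalIntegrable 0 M)]
  have e : ∫ ξ in (-M)..0, (Real.sqrt |ξ| : ℂ) * ph t x ξ
      = ∫ ξ in (0:ℝ)..M, (Real.sqrt |ξ| : ℂ) * ph (-t) (-x) ξ := by
    have := intervalIntegral.integral_comp_neg (a := 0) (b := M)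
      (fun ξ : ℝ => (Real.sqrt |ξ| : ℂ) * ph t x ξ)
    rw [neg_zero] at this
    rw [← this]
    simp only [abs_neg, ph_neg]
  rw [e]
  have h1 := half_bound ht x hM
  have h2 := half_bound (neg_ne_zero.2 ht) (-x) hM
  rw [abs_neg] at h2
  refine (norm_add_le _ _).trans ?_
  have : 40 / Real.sqrt |t| = 20 / Real.sqrt |t| + 20 / Real.sqrt |t| := by ring
  linarith


lemma lintegral_abs_le (f : ℝ → ℝ≥0∞) : ∫⁻ x, f |x| ≤ 2 * ∫⁻ x in Ioi (0:ℝ), f x := by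
  have h1 : ∫⁻ x in Ioi (0:ℝ), f |x| = ∫⁻ x in Ioi (0:ℝ), f x := by
    apply setLIntegral_congr_fun measurableSet_Ioi
    intro x hx
    simp only [abs_of_pos (mem_Ioi.1 hx)]
  have h2 : ∫⁻ x in Iio (0:ℝ), f |x| = ∫⁻ x in Ioi (0:ℝ), f |x| := by
    have := (Measure.measurePreserving_neg (volume : Measure ℝ)).setLIntegral_comp_preimage_emb
      (MeasurableEquiv.neg ℝ).measurableEmbedding (fun x => f |x|) (Ioi 0)
    rw [← this]
    simp
  have h3 : ∫⁻ x, f |x| = (∫⁻ x in Iio (0:ℝ), f |x|) + ∫⁻ x in Ioi (0:ℝ), f |x| := by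
    rw [← lintegral_add_compl (μ := volume) _ (measurableSet_Iio (a := (0:ℝ))), compl_Iio,
      setLIntegral_congr (Ioi_ae_eq_Ici.symm : Ici (0:ℝ) =ᵐ[volume] Ioi 0)]
  rw [h3, h2, h1, two_mul]

/-- The kernel. -/
def kk (s : ℝ) : ℝ≥0∞ := ENNReal.ofReal (|s| ^ (-(1/2) : ℝ))

lemma kk_meas : Measurable kk := by unfold kk; fun_prop

lemma kk_neg (s : ℝ) : kk (-s) = kk s := by unfold kk; rw [abs_neg]

lemma kk_near {ρ : ℝ} (hρ : 0 < ρ) :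
    ∫⁻ s, (if |s| ≤ ρ then kk s else 0) ≤ ENNReal.ofReal (4 * ρ ^ (1/2 : ℝ)) := by
  have := lintegral_abs_le (fun s => if s ≤ ρ then ENNReal.ofReal (s ^ (-(1/2) : ℝ)) else 0)
  refine this.trans ?_
  have e : ∫⁻ x in Ioi (0:ℝ), (if x ≤ ρ then ENNReal.ofReal (x ^ (-(1/2) : ℝ)) else 0)
      = ∫⁻ x in Ioc 0 ρ, ENNReal.ofReal (x ^ (-(1/2) : ℝ)) := by
    rw [← lintegral_indicator measurableSet_Ioi, ← lintegral_indicator measurableSet_Ioc]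
    congr 1
    ext x
    by_cases h1 : 0 < x <;> by_cases h2 : x ≤ ρ <;> simp [h1, h2, indicator]
  have hi : IntervalIntegrable (fun x : ℝ => x ^ (-(1/2) : ℝ)) volume 0 ρ :=
    intervalIntegral.intervalIntegrable_rpow' (by norm_num)
  have hi2 := (intervalIntegrable_iff_integrableOn_Ioc_of_le hρ.le).1 hi
  rw [e, ← ofReal_integral_eq_lintegral_ofReal hi2, ← intervalIntegral.integral_of_le hρ.le,
    integral_rpow (Or.inl (by norm_num))]
  · rw [Real.zero_rpow (by norm_num), show (2:ℝ≥0∞) = ENNReal.ofReal 2 by simp, ← ENNReal.ofReal_mul (by norm_num)]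
    apply ENNReal.ofReal_le_ofReal
    norm_num
    linarith
  · filter_upwards [ae_restrict_mem measurableSet_Ioc] with x hx
    exact Real.rpow_nonneg hx.1.le _

lemma kk_far {ρ : ℝ} (hρ : 0 < ρ) :
    ∫⁻ s, (if |s| ≤ ρ then 0 else kk s) ^ (4:ℝ) ≤ ENNReal.ofReal (2 * ρ⁻¹) := by
  have := lintegral_abs_le (fun s => (if s ≤ ρ then 0 else ENNReal.ofReal (s ^ (-(1/2) : ℝ))) ^ (4:ℝ))
  refine this.trans ?_
  have e : ∫⁻ x in Ioi (0:ℝ), (if x ≤ ρ then 0 else ENNReal.ofReal (x ^ (-(1/2) : ℝ))) ^ (4:ℝ)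
      = ∫⁻ x in Ioi ρ, ENNReal.ofReal (x ^ (-2 : ℝ)) := by
    rw [← lintegral_indicator measurableSet_Ioi, ← lintegral_indicator measurableSet_Ioi]
    congr 1
    ext x
    by_cases h2 : x ≤ ρ
    · by_cases h1 : 0 < x <;> simp [h1, h2, indicator]
    · have h1 : 0 < x := hρ.trans (not_le.1 h2)
      simp only [indicator, mem_Ioi, h1, h2, if_true, if_false, not_le.1 h2]
      rw [ENNReal.ofReal_rpow_of_nonneg (by positivity) (by norm_num), ← Real.rpow_mul h1.le]
      norm_num
  have hi2 : IntegrableOn (fun x : ℝ => x ^ (-2 : ℝ)) (Ioi ρ) :=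
    integrableOn_Ioi_rpow_of_lt (by norm_num) hρ
  rw [e, ← ofReal_integral_eq_lintegral_ofReal hi2, 
    integral_Ioi_rpow_of_lt (by norm_num) hρ]
  · rw [show (2:ℝ≥0∞) = ENNReal.ofReal 2 by simp, ← ENNReal.ofReal_mul (by norm_num)]
    apply ENNReal.ofReal_le_ofReal
    norm_num
    rw [Real.rpow_neg_one]
  · filter_upwards [ae_restrict_mem measurableSet_Ioi] with x hx
    exact Real.rpow_nonneg (hρ.trans hx).le _

lemma hls_inner (F : ℝ → ℝ≥0∞) (hF : Measurable F) (t x n : ℝ) (hx : 0 < x) (hn : 0 < n)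
    (hFt : F t = ENNReal.ofReal x) (hN : ∫⁻ s, F s ^ (4/3 : ℝ) = ENNReal.ofReal n) :
    ∫⁻ s, (if F s ≤ F t then F s * kk (t - s) else 0)
      ≤ ENNReal.ofReal (8 * n ^ (1/2 : ℝ)) * F t ^ (1/3 : ℝ) := by
  set ρ : ℝ := n * x ^ (-(4/3) : ℝ) with hρd
  have hρ : 0 < ρ := by positivity
  have m1 : Measurable fun s => if |s| ≤ ρ then kk s else 0 :=
    Measurable.ite (measurableSet_le (by fun_prop) (by fun_prop)) kk_meas measurable_const
  have m2 : Measurable fun s => if |s| ≤ ρ then 0 else kk s :=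
    Measurable.ite (measurableSet_le (by fun_prop) (by fun_prop)) measurable_const kk_meas
  have pt : ∀ s, (if F s ≤ F t then F s * kk (t - s) else 0) ≤
      F t * (if |t - s| ≤ ρ then kk (t - s) else 0) + F s * (if |t - s| ≤ ρ then 0 else kk (t - s)) := by
    intro s
    by_cases h : F s ≤ F t <;> by_cases h' : |t - s| ≤ ρ <;> simp [h, h']
    gcongr
  refine (lintegral_mono pt).trans ?_
  have m1' : Measurable fun s => if |t - s| ≤ ρ then kk (t - s) else 0 :=
    m1.comp (measurable_const.sub measurable_id)
  rw [lintegral_add_left (m1'.const_mul _), lintegral_const_mul _ m1']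
  have a1 : ∫⁻ s, (if |t - s| ≤ ρ then kk (t - s) else 0) ≤ ENNReal.ofReal (4 * ρ ^ (1/2 : ℝ)) := by
    rw [lintegral_sub_left_eq_self (fun s => if |s| ≤ ρ then kk s else 0) t]
    exact kk_near hρ
  have a2 : ∫⁻ s, F s * (if |t - s| ≤ ρ then 0 else kk (t - s)) ≤
      ENNReal.ofReal n ^ (3/4 : ℝ) * ENNReal.ofReal (2 * ρ⁻¹) ^ (1/4 : ℝ) := by
    have := ENNReal.lintegral_mul_le_Lp_mul_Lq (volume : Measure ℝ) (p := 4/3) (q := 4)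
      (by rw [Real.holderConjugate_iff]; norm_num) hF.aemeasurable
      (m2.comp (measurable_const.sub measurable_id) : Measurable (fun s => if |t - s| ≤ ρ then 0 else kk (t - s))).aemeasurable
    refine this.trans ?_
    rw [hN, show (1 / (4/3) : ℝ) = 3/4 by norm_num]
    gcongr
    exact (lintegral_sub_left_eq_self (fun s => (if |s| ≤ ρ then 0 else kk s) ^ (4:ℝ)) t).trans_le
      (kk_far hρ)
  refine (add_le_add (mul_le_mul_right a1 _) a2).trans ?_
  rw [hFt, ENNReal.ofReal_rpow_of_pos hn, ENNReal.ofReal_rpow_of_pos (by positivity),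
    ENNReal.ofReal_rpow_of_pos hx, ← ENNReal.ofReal_mul hx.le, ← ENNReal.ofReal_mul (by positivity),
    ← ENNReal.ofReal_mul (by positivity), ← ENNReal.ofReal_add (by positivity) (by positivity)]
  apply ENNReal.ofReal_le_ofReal
  have e1 : x * ρ ^ (1/2 : ℝ) = n ^ (1/2 : ℝ) * x ^ (1/3 : ℝ) := by
    rw [hρd, Real.mul_rpow hn.le (by positivity), ← Real.rpow_mul hx.le]
    nth_rw 1 [← Real.rpow_one x]
    rw [mul_left_comm, ← Real.rpow_add hx]
    norm_num
  have e2 : n ^ (3/4 : ℝ) * (2 * ρ⁻¹) ^ (1/4 : ℝ) ≤ 2 * (n ^ (1/2 : ℝ) * x ^ (1/3 : ℝ)) := by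
    rw [Real.mul_rpow (by norm_num) (by positivity), ← Real.rpow_neg_one ρ, ← Real.rpow_mul hρ.le,
      hρd, Real.mul_rpow hn.le (by positivity), ← Real.rpow_mul hx.le]
    have : (2:ℝ) ^ (1/4 : ℝ) ≤ 2 := by
      calc (2:ℝ) ^ (1/4 : ℝ) ≤ 2 ^ (1:ℝ) := Real.rpow_le_rpow_of_exponent_le (by norm_num) (by norm_num)
        _ = 2 := Real.rpow_one 2
    calc n ^ (3/4 : ℝ) * (2 ^ (1/4 : ℝ) * (n ^ (-1 * (1/4) : ℝ) * x ^ (-(4/3) * (-1 * (1/4)) : ℝ)))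
        = 2 ^ (1/4 : ℝ) * ((n ^ (3/4 : ℝ) * n ^ (-1 * (1/4) : ℝ)) * x ^ (-(4/3) * (-1 * (1/4)) : ℝ)) := by ring
      _ = 2 ^ (1/4 : ℝ) * (n ^ (1/2 : ℝ) * x ^ (1/3 : ℝ)) := by
          rw [← Real.rpow_add hn]; norm_num
      _ ≤ _ := by gcongr
  have e3 : 0 ≤ n ^ (1/2 : ℝ) * x ^ (1/3 : ℝ) := by positivity
  nlinarith

lemma hls (F : ℝ → ℝ≥0∞) (hF : Measurable F) (hfin : ∀ t, F t ≠ ∞) :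
    ∫⁻ t, ∫⁻ s, F t * F s * kk (t - s) ≤ 16 * (∫⁻ s, F s ^ (4/3 : ℝ)) ^ (3/2 : ℝ) := by
  set N := ∫⁻ s, F s ^ (4/3 : ℝ) with hN
  rcases eq_or_ne N ∞ with h | h
  · rw [h, ENNReal.top_rpow_of_pos (by norm_num)]; simp
  rcases eq_or_ne N 0 with h0 | h0
  · have : F =ᵐ[volume] 0 := by
      have := (lintegral_eq_zero_iff (by fun_prop)).1 h0
      filter_upwards [this] with s hs
      have h43 : ¬ ((4/3 : ℝ) < 0) := by norm_num
      simpa [h43] using hs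
    have : ∫⁻ t, ∫⁻ s, F t * F s * kk (t - s) = 0 := by
      rw [lintegral_eq_zero_iff']
      · filter_upwards [this] with t ht
        simp [ht]
      · apply Measurable.aemeasurable
        apply Measurable.lintegral_prod_right'
          (f := fun p : ℝ × ℝ => F p.1 * F p.2 * kk (p.1 - p.2))
        have := kk_meas
        fun_prop
    rw [this]; exact zero_le
  have hn : 0 < N.toReal := ENNReal.toReal_pos h0 h
  have hNn : N = ENNReal.ofReal N.toReal := (ENNReal.ofReal_toReal h).symm
  have hk := kk_meas
  have mI : Measurable fun p : ℝ × ℝ => if F p.2 ≤ F p.1 then F p.2 * kk (p.1 - p.2) else 0 :=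
    Measurable.ite (measurableSet_le (by fun_prop) (by fun_prop)) (by fun_prop) measurable_const
  set J := ∫⁻ t, F t * ∫⁻ s, (if F s ≤ F t then F s * kk (t - s) else 0) with hJ
  have hJle : J ≤ 8 * N ^ (3/2 : ℝ) := by
    calc J ≤ ∫⁻ t, ENNReal.ofReal (8 * N.toReal ^ (1/2 : ℝ)) * F t ^ (4/3 : ℝ) := by
          apply lintegral_mono
          intro t
          rcases eq_or_ne (F t) 0 with hz | hz
          · simp [hz]
          · have := hls_inner F hF t (F t).toReal N.toReal (ENNReal.toReal_pos hz (hfin t)) hn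
              (ENNReal.ofReal_toReal (hfin t)).symm hNn
            refine (mul_le_mul_right this (F t)).trans (le_of_eq ?_)
            have : F t ^ (4/3 : ℝ) = F t * F t ^ (1/3 : ℝ) := by
              nth_rw 2 [← ENNReal.rpow_one (F t)]
              rw [← ENNReal.rpow_add _ _ hz (hfin t)]
              norm_num
            simp only [this]; ring
      _ = ENNReal.ofReal (8 * N.toReal ^ (1/2 : ℝ)) * N := by
          rw [lintegral_const_mul _ (by fun_prop)]
      _ = 8 * N ^ (3/2 : ℝ) := by
          rw [ENNReal.ofReal_mul (by norm_num), ← ENNReal.ofReal_rpow_of_pos hn, ← hNn, mul_assoc]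
          nth_rw 2 [← ENNReal.rpow_one N]
          rw [← ENNReal.rpow_add _ _ h0 h]
          norm_num
  have hJ2 : ∫⁻ t, ∫⁻ s, F s * (if F t ≤ F s then F t * kk (s - t) else 0) = J := by
    rw [hJ, lintegral_lintegral_swap]
    · congr 1
      ext s
      rw [lintegral_const_mul]
      exact mI.comp (measurable_const.prodMk measurable_id)
    · have := mI.comp measurable_swap
      exact ((hF.comp measurable_snd).mul this).aemeasurable
  calc ∫⁻ t, ∫⁻ s, F t * F s * kk (t - s)
      ≤ ∫⁻ t, ∫⁻ s, (F t * (if F s ≤ F t then F s * kk (t - s) else 0)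
        + F s * (if F t ≤ F s then F t * kk (s - t) else 0)) := by
        apply lintegral_mono; intro t
        apply lintegral_mono; intro s
        rcases le_total (F s) (F t) with h | h
        · simp only [h, if_true]
          refine le_trans (le_of_eq (mul_assoc _ _ _)) le_self_add
        · simp only [h, if_true]
          rw [← neg_sub, kk_neg]
          refine le_trans (le_of_eq ?_) le_add_self
          ring
    _ = J + J := by
        nth_rw 2 [← hJ2]
        have hm : Measurable fun t => F t * ∫⁻ s, (if F s ≤ F t then F s * kk (t - s) else 0) :=
          Measurable.mul hF mI.lintegral_prod_right'
        rw [hJ, ← lintegral_add_left hm]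
        congr 1; ext t
        have : Measurable fun s => if F s ≤ F t then F s * kk (t - s) else 0 :=
          mI.comp (measurable_const.prodMk measurable_id)
        rw [lintegral_add_left (this.const_mul _), lintegral_const_mul _ this]
    _ ≤ 8 * N ^ (3/2 : ℝ) + 8 * N ^ (3/2 : ℝ) := add_le_add hJle hJle
    _ = _ := by rw [← add_mul]; norm_num


/-- The free evolution with Fourier data `φ` (up to constants). -/
def U (φ : ℝ → ℂ) (t x : ℝ) : ℂ := ∫ ξ, ph t x ξ * φ ξ

/-- Pointwise-in-time supremum of the free evolution. -/
def B (φ : ℝ → ℂ) (t : ℝ) : ℝ≥0∞ := ⨆ x, ‖U φ t x‖ₑ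

lemma ph_meas3 : Continuous fun p : ℝ × ℝ × ℝ => ph p.1 p.2.1 p.2.2 := by
  unfold ph; fun_prop

lemma ph_meas1 (t x : ℝ) : Continuous fun ξ => ph t x ξ := by
  unfold ph; fun_prop

lemma ph_integrable {φ : ℝ → ℂ} (hφ : Integrable φ) (t x : ℝ) :
    Integrable fun ξ => ph t x ξ * φ ξ := by
  apply hφ.bdd_mul (c := 1) (ph_meas1 t x).aestronglyMeasurable
  filter_upwards with ξ
  rw [ph_norm]

lemma U_cont {φ : ℝ → ℂ} (hφ : Integrable φ) : Continuous fun p : ℝ × ℝ => U φ p.1 p.2 := by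
  unfold U
  apply continuous_of_dominated (bound := fun ξ => ‖φ ξ‖)
  · intro p
    exact (ph_integrable hφ p.1 p.2).aestronglyMeasurable
  · intro p
    filter_upwards with ξ
    rw [norm_mul, ph_norm, one_mul]
  · exact hφ.norm
  · filter_upwards with ξ
    exact (ph_cont ξ).mul continuous_const

lemma U_norm_le (φ : ℝ → ℂ) (t x : ℝ) : ‖U φ t x‖ ≤ ∫ ξ, ‖φ ξ‖ := by
  unfold U
  refine (norm_integral_le_integral_norm _).trans (le_of_eq ?_)
  congr 1; ext ξ; rw [norm_mul, ph_norm, one_mul]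

lemma B_meas {φ : ℝ → ℂ} (hφ : Integrable φ) : Measurable (B φ) := by
  have : LowerSemicontinuous (B φ) := by
    unfold B
    apply lowerSemicontinuous_iSup
    intro x
    apply Continuous.lowerSemicontinuous
    exact (((U_cont hφ).comp (by fun_prop : Continuous fun t : ℝ => (t, x)))).enorm
  exact this.measurable

lemma le_B (φ : ℝ → ℂ) (t x : ℝ) : ‖U φ t x‖ₑ ≤ B φ t := le_iSup (fun x => ‖U φ t x‖ₑ) x

lemma U_eq_iftx (φ : ℝ → ℂ) (t x : ℝ) :
    iftx (fun ξ => Complex.exp (Complex.I * ((t * ξ ^ 3 : ℝ) : ℂ)) * φ ξ) x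
      = (2 * Real.pi)⁻¹ • U φ t x := by
  unfold iftx U
  congr 1
  congr 1; ext ξ
  rw [← mul_assoc, ← Complex.exp_add, ph]
  congr 2
  push_cast; ring

lemma airySol_eq (u₀ : ℝ → ℂ) (t x : ℝ) :
    airySol u₀ t x = (2 * Real.pi)⁻¹ • U (ftx u₀) t x := U_eq_iftx _ t x

/-- Plancherel at fixed time. -/
lemma U_L2 {φ : ℝ → ℂ} (h1 : Integrable φ) (h2 : MemLp φ 2) (t : ℝ) :
    eLpNorm (U φ t) 2 volume ≤ ENNReal.ofReal (2 * Real.pi) * eLpNorm φ 2 volume := by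
  set g : ℝ → ℂ := fun ξ => Complex.exp (Complex.I * ((t * ξ ^ 3 : ℝ) : ℂ)) * φ ξ with hg
  have hgn : ∀ ξ, ‖g ξ‖ = ‖φ ξ‖ := by
    intro ξ
    rw [hg]
    simp only
    rw [norm_mul, mul_comm Complex.I, Complex.norm_exp_ofReal_mul_I, one_mul]
  have hgm : AEStronglyMeasurable g volume := by
    apply AEStronglyMeasurable.mul _ h1.aestronglyMeasurable
    exact Continuous.aestronglyMeasurable (by fun_prop)
  have g1 : Integrable g := h1.congr' hgm (by filter_upwards with ξ; rw [hgn])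
  have e : eLpNorm g 2 volume = eLpNorm φ 2 volume :=
    eLpNorm_congr_norm_ae (by filter_upwards with ξ; rw [hgn])
  have g2 : MemLp g 2 := ⟨hgm, by rw [e]; exact h2.2⟩
  have hp := plancherel g g1 g2
  have hpi : (0:ℝ) < 2 * Real.pi := by positivity
  have hU : U φ t = (2 * Real.pi) • iftx g := by
    ext x
    rw [Pi.smul_apply, U_eq_iftx, smul_smul, mul_inv_cancel₀ hpi.ne', one_smul]
  rw [hU, eLpNorm_const_smul, hp, e]
  have : ‖2 * Real.pi‖ₑ = ENNReal.ofReal (2 * Real.pi) := by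
    rw [Real.enorm_eq_ofReal hpi.le]
  rw [this]
  gcongr
  calc _ ≤ 1 * eLpNorm φ 2 volume := by
        gcongr
        rw [← ENNReal.ofReal_one]
        apply ENNReal.ofReal_le_ofReal
        apply Real.rpow_le_one_of_one_le_of_nonpos
        · nlinarith [Real.pi_gt_three]
        · norm_num
    _ = _ := one_mul _



lemma kk_eq {s : ℝ} (K : ℝ) (h : K ≤ 40 / Real.sqrt |s|) :
    ENNReal.ofReal K ≤ 40 * kk s := by
  unfold kk
  have : (40 : ℝ≥0∞) = ENNReal.ofReal 40 := by norm_num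
  rw [this, ← ENNReal.ofReal_mul (by norm_num)]
  apply ENNReal.ofReal_le_ofReal
  refine h.trans (le_of_eq ?_)
  rw [Real.rpow_neg (abs_nonneg _), Real.sqrt_eq_rpow]
  rfl

lemma ph_diff (t s x y ξ : ℝ) : ph t x ξ * (starRingEnd ℂ) (ph s y ξ) = ph (t - s) (x - y) ξ := by
  rw [ph_conj]
  unfold ph
  rw [← Complex.exp_add]
  congr 1
  push_cast; ring

/-- `TT*` estimate on a bounded frequency window. -/
lemma tt_star (F : ℝ → ℂ) (hF : Measurable F) (hFi : Integrable F) (y : ℝ → ℝ) (hy : Measurable y)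
    {M : ℝ} (hM : 0 ≤ M) :
    ∫⁻ ξ in Icc (-M) M, ENNReal.ofReal (Real.sqrt |ξ|) * ‖∫ t, F t * ph t (y t) ξ‖ₑ ^ 2
      ≤ 640 * (∫⁻ t, ‖F t‖ₑ ^ (4/3 : ℝ)) ^ (3/2 : ℝ) := by
  set G : ℝ → ℂ := fun ξ => ∫ t, F t * ph t (y t) ξ with hG
  have hGc : Continuous G := by
    apply continuous_of_dominated (bound := fun t => ‖F t‖)
    · intro ξ
      apply Measurable.aestronglyMeasurable
      exact hF.mul (ph_meas3.measurable.comp (measurable_id.prodMk (hy.prodMk measurable_const)))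
    · intro ξ
      filter_upwards with t
      rw [norm_mul, ph_norm, mul_one]
    · exact hFi.norm
    · filter_upwards with t
      exact continuous_const.mul (ph_meas1 _ _)
  have hsq : ∀ ξ, (((‖G ξ‖ ^ 2 : ℝ)) : ℂ) =
      ∫ p : ℝ × ℝ, (F p.1 * (starRingEnd ℂ) (F p.2)) * ph (p.1 - p.2) (y p.1 - y p.2) ξ := by
    intro ξ
    have h1 : (((‖G ξ‖ ^ 2 : ℝ)) : ℂ) = G ξ * (starRingEnd ℂ) (G ξ) := by
      rw [Complex.mul_conj, Complex.normSq_eq_norm_sq]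
    rw [h1, hG]
    simp only
    rw [← integral_conj, ← integral_prod_mul]
    congr 1
    ext p
    rw [map_mul, ← ph_diff]; ring
  set K : ℝ × ℝ → ℂ := fun p => ∫ ξ in Icc (-M) M, (Real.sqrt |ξ| : ℂ) * ph (p.1 - p.2) (y p.1 - y p.2) ξ
    with hK
  have hFF : Integrable (fun p : ℝ × ℝ => F p.1 * (starRingEnd ℂ) (F p.2)) (volume.prod volume) := by
    have hc : Integrable fun t => (starRingEnd ℂ) (F t) :=
      Complex.conjCLE.toContinuousLinearMap.integrable_comp hFi
    exact hFi.mul_prod hc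
  have hswap : ∫ ξ in Icc (-M) M, ((Real.sqrt |ξ| * ‖G ξ‖ ^ 2 : ℝ) : ℂ) =
      ∫ p : ℝ × ℝ, (F p.1 * (starRingEnd ℂ) (F p.2)) * K p := by
    have e1 : ∀ ξ, ((Real.sqrt |ξ| * ‖G ξ‖ ^ 2 : ℝ) : ℂ) =
       ∫ p : ℝ × ℝ, (F p.1 * (starRingEnd ℂ) (F p.2)) * ((Real.sqrt |ξ| : ℂ) * ph (p.1 - p.2) (y p.1 - y p.2) ξ) := by
      intro ξ
      rw [Complex.ofReal_mul, hsq, ← integral_const_mul]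
      congr 1; ext p; ring
    simp_rw [e1]
    rw [integral_integral_swap]
    · congr 1; ext p
      rw [hK]
      simp only
      rw [integral_const_mul]
    · have hw : Integrable (fun ξ : ℝ => (Real.sqrt |ξ| : ℂ)) (volume.restrict (Icc (-M) M)) := by
        apply Continuous.integrableOn_Icc; fun_prop
      have hprod := hw.mul_prod hFF
      refine hprod.mono ?_ ?_
      · apply Measurable.aestronglyMeasurable
        have hy1 : Measurable fun a : ℝ × ℝ × ℝ => y a.2.1 := hy.comp (by fun_prop)
        have hy2 : Measurable fun a : ℝ × ℝ × ℝ => y a.2.2 := hy.comp (by fun_prop)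
        have hF1 : Measurable fun a : ℝ × ℝ × ℝ => F a.2.1 := hF.comp (by fun_prop)
        have hF2 : Measurable fun a : ℝ × ℝ × ℝ => F a.2.2 := hF.comp (by fun_prop)
        have hph : Measurable fun a : ℝ × ℝ × ℝ => ph (a.2.1 - a.2.2) (y a.2.1 - y a.2.2) a.1 :=
          ph_meas3.measurable.comp (g := fun p : ℝ × ℝ × ℝ => ph p.1 p.2.1 p.2.2)
            (f := fun a : ℝ × ℝ × ℝ => (a.2.1 - a.2.2, y a.2.1 - y a.2.2, a.1)) (by fun_prop)
        have hc : Measurable fun a : ℝ × ℝ × ℝ => (starRingEnd ℂ) (F a.2.2) :=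
          Complex.continuous_conj.measurable.comp hF2
        have hs : Measurable fun a : ℝ × ℝ × ℝ => (Real.sqrt |a.1| : ℂ) := by fun_prop
        exact (hF1.mul hc).mul (hs.mul hph)
      · filter_upwards with a
        simp only [Function.uncurry, norm_mul, ph_norm, mul_one]
        rw [mul_comm]
  have hintg : IntegrableOn (fun ξ => Real.sqrt |ξ| * ‖G ξ‖ ^ 2) (Icc (-M) M) := by
    apply Continuous.integrableOn_Icc; fun_prop
  have e2 : ∫⁻ ξ in Icc (-M) M, ENNReal.ofReal (Real.sqrt |ξ|) * ‖G ξ‖ₑ ^ 2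
      = ENNReal.ofReal (∫ ξ in Icc (-M) M, Real.sqrt |ξ| * ‖G ξ‖ ^ 2) := by
    rw [ofReal_integral_eq_lintegral_ofReal hintg (by filter_upwards with ξ; positivity)]
    congr 1; ext ξ
    rw [ENNReal.ofReal_mul (by positivity), ENNReal.ofReal_pow (by positivity), ofReal_norm]
  rw [e2]
  calc ENNReal.ofReal (∫ ξ in Icc (-M) M, Real.sqrt |ξ| * ‖G ξ‖ ^ 2)
      ≤ ‖∫ ξ in Icc (-M) M, ((Real.sqrt |ξ| * ‖G ξ‖ ^ 2 : ℝ) : ℂ)‖ₑ := by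
        rw [integral_complex_ofReal, ← ofReal_norm, Complex.norm_real]
        exact ENNReal.ofReal_le_ofReal (le_abs_self _)
    _ ≤ ∫⁻ p : ℝ × ℝ, ‖(F p.1 * (starRingEnd ℂ) (F p.2)) * K p‖ₑ := by
        rw [hswap]; exact enorm_integral_le_lintegral_enorm _
    _ ≤ ∫⁻ t, ∫⁻ s, ‖(F t * (starRingEnd ℂ) (F s)) * K (t, s)‖ₑ := by
        exact lintegral_prod_le _
    _ ≤ ∫⁻ t, ∫⁻ s, 40 * (‖F t‖ₑ * ‖F s‖ₑ * kk (t - s)) := by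
        apply lintegral_mono; intro t
        apply lintegral_mono_ae
        have : ∀ᵐ s : ℝ, s ≠ t := by simp [ae_iff]
        filter_upwards [this] with s hs
        rw [enorm_mul, enorm_mul, RCLike.enorm_conj, ← ofReal_norm (K (t, s))]
        have := kk_eq _ (ker_bound (sub_ne_zero.2 hs.symm) (y t - y s) hM)
        calc _ ≤ ‖F t‖ₑ * ‖F s‖ₑ * (40 * kk (t - s)) := by gcongr
          _ = _ := by ring
    _ = 40 * ∫⁻ t, ∫⁻ s, (‖F t‖ₑ * ‖F s‖ₑ * kk (t - s)) := by
        rw [← lintegral_const_mul' _ _ (by norm_num)]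
        congr 1; ext t
        rw [← lintegral_const_mul' _ _ (by norm_num)]
    _ ≤ 40 * (16 * (∫⁻ s, ‖F s‖ₑ ^ (4/3 : ℝ)) ^ (3/2 : ℝ)) := by
        gcongr
        exact hls (fun t => ‖F t‖ₑ) hF.enorm (fun t => enorm_ne_top)
    _ = _ := by rw [← mul_assoc]; norm_num

lemma tt_star_full (F : ℝ → ℂ) (hF : Measurable F) (hFi : Integrable F) (y : ℝ → ℝ)
    (hy : Measurable y) :
    ∫⁻ ξ, ENNReal.ofReal (Real.sqrt |ξ|) * ‖∫ t, F t * ph t (y t) ξ‖ₑ ^ 2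
      ≤ 640 * (∫⁻ t, ‖F t‖ₑ ^ (4/3 : ℝ)) ^ (3/2 : ℝ) := by
  have hU : (⋃ n : ℕ, Icc (-(n:ℝ)) n) = univ := by
    ext x
    simp only [mem_iUnion, mem_univ, iff_true, mem_Icc]
    obtain ⟨n, hn⟩ := exists_nat_ge |x|
    exact ⟨n, abs_le.1 hn⟩
  rw [← setLIntegral_univ, ← hU, setLIntegral_iUnion_of_directed]
  · apply iSup_le
    intro n
    exact tt_star F hF hFi y hy (Nat.cast_nonneg n)
  · apply Monotone.directed_le
    intro m n hmn
    apply Icc_subset_Icc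
    · simp only [neg_le_neg_iff]; exact_mod_cast hmn
    · exact_mod_cast hmn

/-- The weighted frequency norm. -/
def W (φ : ℝ → ℂ) : ℝ≥0∞ := ∫⁻ ξ, ‖φ ξ‖ₑ ^ 2 * ENNReal.ofReal (|ξ| ^ (-(1/2) : ℝ))

lemma cs_weight (φ G : ℝ → ℂ) (hφ : AEStronglyMeasurable φ) (hG : AEStronglyMeasurable G) :
    ∫⁻ ξ, ‖φ ξ‖ₑ * ‖G ξ‖ₑ ≤
      (W φ) ^ (1/2 : ℝ) * (∫⁻ ξ, ENNReal.ofReal (Real.sqrt |ξ|) * ‖G ξ‖ₑ ^ 2) ^ (1/2 : ℝ) := by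
  have h := ENNReal.lintegral_mul_norm_pow_le (μ := (volume : Measure ℝ))
    (f := fun ξ => ‖φ ξ‖ₑ ^ 2 * ENNReal.ofReal (|ξ| ^ (-(1/2) : ℝ)))
    (g := fun ξ => ENNReal.ofReal (Real.sqrt |ξ|) * ‖G ξ‖ₑ ^ 2) (p := 1/2) (q := 1/2)
    (by
      refine (hφ.enorm.pow_const 2).mul ?_
      exact Measurable.aemeasurable (by fun_prop))
    (by
      refine AEMeasurable.mul ?_ (hG.enorm.pow_const 2)
      exact Measurable.aemeasurable (by fun_prop)) (by norm_num) (by norm_num) (by norm_num)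
  refine le_trans (lintegral_mono_ae ?_) h
  have : ∀ᵐ s : ℝ, s ≠ 0 := by simp [ae_iff]
  filter_upwards [this] with ξ hξ
  have hξ' : 0 < |ξ| := abs_pos.2 hξ
  rw [← ENNReal.mul_rpow_of_nonneg _ _ (by norm_num)]
  have e : ‖φ ξ‖ₑ ^ 2 * ENNReal.ofReal (|ξ| ^ (-(1/2) : ℝ)) * (ENNReal.ofReal (Real.sqrt |ξ|) * ‖G ξ‖ₑ ^ 2)
      = (‖φ ξ‖ₑ * ‖G ξ‖ₑ) ^ 2 := by
    have : ENNReal.ofReal (|ξ| ^ (-(1/2) : ℝ)) * ENNReal.ofReal (Real.sqrt |ξ|) = 1 := by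
      rw [← ENNReal.ofReal_mul (by positivity), Real.sqrt_eq_rpow, ← Real.rpow_add hξ']
      norm_num
    calc _ = (‖φ ξ‖ₑ * ‖G ξ‖ₑ) ^ 2 * (ENNReal.ofReal (|ξ| ^ (-(1/2) : ℝ)) * ENNReal.ofReal (Real.sqrt |ξ|)) := by ring
      _ = _ := by rw [this, mul_one]
  rw [e, ← ENNReal.rpow_natCast, ← ENNReal.rpow_mul]
  norm_num

lemma absorb {X N : ℝ≥0∞} (hX : X ≠ ∞)
    (h : X ≤ N ^ (1/2 : ℝ) * (640 * X ^ (3/2 : ℝ)) ^ (1/2 : ℝ)) : X ≤ 640 ^ 2 * N ^ 2 := by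
  by_cases h0 : X = 0
  · rw [h0]; exact zero_le
  rw [ENNReal.mul_rpow_of_nonneg _ _ (by norm_num), ← ENNReal.rpow_mul] at h
  have hX4 : X = X ^ (1/4 : ℝ) * X ^ (3/4 : ℝ) := by
    rw [← ENNReal.rpow_add _ _ h0 hX]; norm_num
  have h3 : X ^ (3/4 : ℝ) ≠ 0 := by simp [h0, hX]
  have h3' : X ^ (3/4 : ℝ) ≠ ∞ := by simp [h0, hX]
  have h5 : X ^ (1/4 : ℝ) ≤ N ^ (1/2 : ℝ) * 640 ^ (1/2 : ℝ) := by
    rw [← ENNReal.mul_le_mul_iff_left h3 h3']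
    calc _ = X := hX4.symm
      _ ≤ _ := h
      _ = _ := by rw [show (3/2 * (1/2) : ℝ) = 3/4 by norm_num]; ring
  calc X = (X ^ (1/4 : ℝ)) ^ (4 : ℝ) := by rw [← ENNReal.rpow_mul]; norm_num
    _ ≤ (N ^ (1/2 : ℝ) * 640 ^ (1/2 : ℝ)) ^ (4 : ℝ) := by gcongr
    _ = _ := by
        rw [ENNReal.mul_rpow_of_nonneg _ _ (by norm_num), ← ENNReal.rpow_mul, ← ENNReal.rpow_mul, mul_comm]
        norm_num

lemma U_sel_meas {φ : ℝ → ℂ} (hφ : Integrable φ) (y : ℝ → ℝ) (hy : Measurable y) :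
    Measurable fun t => U φ t (y t) :=
  (U_cont hφ).measurable.comp (g := fun p : ℝ × ℝ => U φ p.1 p.2)
    (f := fun t : ℝ => (t, y t)) (by fun_prop)

lemma L4_select {φ : ℝ → ℂ} (hφ : Integrable φ) (y : ℝ → ℝ) (hy : Measurable y) (R : ℝ) :
    ∫⁻ t in Icc (-R) R, ‖U φ t (y t)‖ₑ ^ 4 ≤ 640 ^ 2 * W φ ^ 2 := by
  set v : ℝ → ℂ := fun t => U φ t (y t) with hv
  have hvm : Measurable v := U_sel_meas hφ y hy
  set A := ∫ ξ, ‖φ ξ‖ with hA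
  have hvb : ∀ t, ‖v t‖ ≤ A := fun t => U_norm_le φ t (y t)
  have hA0 : 0 ≤ A := (norm_nonneg _).trans (hvb 0)
  set F : ℝ → ℂ := (Icc (-R) R).indicator (fun t => (‖v t‖ ^ 2 : ℝ) * (starRingEnd ℂ) (v t)) with hF
  have hFm : Measurable F := by
    apply Measurable.indicator _ measurableSet_Icc
    apply Measurable.mul
    · fun_prop
    · exact Complex.continuous_conj.measurable.comp hvm
  have hFn : ∀ t, ‖F t‖ₑ = (Icc (-R) R).indicator (fun t => ‖v t‖ₑ ^ 3) t := by
    intro t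
    rw [hF, enorm_indicator_eq_indicator_enorm]
    congr 1; ext s
    rw [enorm_mul, RCLike.enorm_conj, ← ofReal_norm, Complex.norm_real, norm_pow, norm_norm,
      ENNReal.ofReal_pow (norm_nonneg _), ofReal_norm]
    ring
  have hFi : Integrable F := by
    apply IntegrableOn.integrable_indicator _ measurableSet_Icc
    refine Measure.integrableOn_of_bounded (M := A ^ 3) ?_ ?_ ?_
    · simp
    · apply Measurable.aestronglyMeasurable
      apply Measurable.mul
      · fun_prop
      · exact Complex.continuous_conj.measurable.comp hvm
    · filter_upwards with t
      rw [norm_mul, RCLike.norm_conj, Complex.norm_real, norm_pow, norm_norm, ← pow_succ]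
      gcongr
      exact hvb t
  set X := ∫⁻ t in Icc (-R) R, ‖v t‖ₑ ^ 4 with hX
  have hXfin : X ≠ ∞ := by
    apply ne_of_lt
    calc X ≤ ∫⁻ t in Icc (-R) R, ENNReal.ofReal A ^ 4 := by
          apply lintegral_mono; intro t
          simp only
          gcongr
          rw [← ofReal_norm]
          exact ENNReal.ofReal_le_ofReal (hvb t)
      _ < ∞ := by
          rw [setLIntegral_const]
          apply ENNReal.mul_lt_top
          · exact ENNReal.pow_lt_top ENNReal.ofReal_lt_top
          · simp
  have hXF : ∫⁻ t, ‖F t‖ₑ ^ (4/3 : ℝ) = X := by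
    rw [hX, ← lintegral_indicator measurableSet_Icc]
    congr 1; ext t
    rw [hFn]
    by_cases ht : t ∈ Icc (-R) R
    · rw [indicator_of_mem ht, indicator_of_mem ht, ← ENNReal.rpow_natCast, ← ENNReal.rpow_mul, ← ENNReal.rpow_natCast]
      norm_num
    · rw [indicator_of_notMem ht, indicator_of_notMem ht]
      norm_num
  set G : ℝ → ℂ := fun ξ => ∫ t, F t * ph t (y t) ξ with hG
  have hGm : AEStronglyMeasurable G := by
    apply Continuous.aestronglyMeasurable
    apply continuous_of_dominated (bound := fun t => ‖F t‖)
    · intro ξ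
      apply Measurable.aestronglyMeasurable
      exact hFm.mul (ph_meas3.measurable.comp (measurable_id.prodMk (hy.prodMk measurable_const)))
    · intro ξ
      filter_upwards with t
      rw [norm_mul, ph_norm, mul_one]
    · exact hFi.norm
    · filter_upwards with t
      exact continuous_const.mul (ph_meas1 _ _)
  have hfub : ∫ t, F t * v t = ∫ ξ, φ ξ * G ξ := by
    have e1 : ∀ t, F t * v t = ∫ ξ, F t * (ph t (y t) ξ * φ ξ) := by
      intro t; rw [integral_const_mul]; rfl
    simp_rw [e1]
    rw [integral_integral_swap]
    · congr 1; ext ξ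
      rw [hG]
      simp only
      rw [← integral_const_mul]
      congr 1; ext t; ring
    · have hprod := hFi.mul_prod hφ
      refine hprod.mono ?_ ?_
      · have hph : Measurable fun a : ℝ × ℝ => ph a.1 (y a.1) a.2 :=
          ph_meas3.measurable.comp (g := fun p : ℝ × ℝ × ℝ => ph p.1 p.2.1 p.2.2)
            (f := fun a : ℝ × ℝ => (a.1, y a.1, a.2)) (by fun_prop)
        have := hprod.aestronglyMeasurable.mul hph.aestronglyMeasurable
        refine this.congr ?_
        filter_upwards with a
        simp only [Function.uncurry, Pi.mul_apply]
        ring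
      · filter_upwards with a
        simp only [Function.uncurry, norm_mul, ph_norm, one_mul]
        rfl
  have hXle : X ≤ ‖∫ t, F t * v t‖ₑ := by
    have e1 : ∀ t, F t * v t = ((Icc (-R) R).indicator (fun t => ‖v t‖ ^ 4) t : ℝ) := by
      intro t
      rw [hF]
      by_cases ht : t ∈ Icc (-R) R
      · rw [indicator_of_mem ht, indicator_of_mem ht, mul_assoc, mul_comm _ (v t), Complex.mul_conj, Complex.normSq_eq_norm_sq]
        push_cast; ring
      · rw [indicator_of_notMem ht, indicator_of_notMem ht]; simp
    simp_rw [e1]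
    rw [integral_complex_ofReal, ← ofReal_norm, Complex.norm_real, integral_indicator measurableSet_Icc]
    refine le_trans (le_of_eq ?_) (ENNReal.ofReal_le_ofReal (le_abs_self _))
    rw [ofReal_integral_eq_lintegral_ofReal]
    · rw [hX]; congr 1; ext t
      rw [ENNReal.ofReal_pow (norm_nonneg _), ofReal_norm]
    · refine Measure.integrableOn_of_bounded (M := A ^ 4) ?_ ?_ ?_
      · simp
      · apply Measurable.aestronglyMeasurable; fun_prop
      · filter_upwards with t
        rw [norm_pow, norm_norm]
        gcongr
        exact hvb t
    · filter_upwards with t; positivity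
  apply absorb hXfin
  calc X ≤ ‖∫ ξ, φ ξ * G ξ‖ₑ := hfub ▸ hXle
    _ ≤ ∫⁻ ξ, ‖φ ξ * G ξ‖ₑ := enorm_integral_le_lintegral_enorm _
    _ = ∫⁻ ξ, ‖φ ξ‖ₑ * ‖G ξ‖ₑ := by simp_rw [enorm_mul]
    _ ≤ _ := cs_weight φ G hφ.aestronglyMeasurable hGm
    _ ≤ _ := by
        gcongr
        rw [← hXF]
        exact tt_star_full F hFm hFi y hy

/-- Near-optimal measurable selection of the space variable. -/
def sel (φ : ℝ → ℂ) : ℕ → ℝ → ℝ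
  | 0, _ => TopologicalSpace.denseSeq ℝ 0
  | n + 1, t => if ‖U φ t (sel φ n t)‖ < ‖U φ t (TopologicalSpace.denseSeq ℝ (n + 1))‖
      then TopologicalSpace.denseSeq ℝ (n + 1) else sel φ n t

lemma sel_meas {φ : ℝ → ℂ} (hφ : Integrable φ) (n : ℕ) : Measurable (sel φ n) := by
  induction n with
  | zero => exact measurable_const
  | succ n ih =>
    have : sel φ (n+1) = fun t => if ‖U φ t (sel φ n t)‖ < ‖U φ t (TopologicalSpace.denseSeq ℝ (n + 1))‖
      then TopologicalSpace.denseSeq ℝ (n + 1) else sel φ n t := by ext t; rfl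
    rw [this]
    apply Measurable.ite
    · apply measurableSet_lt
      · exact ((U_cont hφ).measurable.comp (measurable_id.prodMk ih)).norm
      · exact ((U_cont hφ).measurable.comp (measurable_id.prodMk measurable_const)).norm
    · exact measurable_const
    · exact ih

lemma sel_mono (φ : ℝ → ℂ) (n : ℕ) (t : ℝ) :
    ‖U φ t (sel φ n t)‖ ≤ ‖U φ t (sel φ (n+1) t)‖ := by
  rw [sel]
  split_ifs with h
  · exact h.le
  · exact le_rfl

lemma sel_ge (φ : ℝ → ℂ) (n : ℕ) (t : ℝ) :
    ‖U φ t (TopologicalSpace.denseSeq ℝ n)‖ ≤ ‖U φ t (sel φ n t)‖ := by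
  cases n with
  | zero => exact le_rfl
  | succ n =>
    rw [sel]
    split_ifs with h
    · exact le_rfl
    · exact not_lt.1 h

lemma B_eq_sel {φ : ℝ → ℂ} (hφ : Integrable φ) (t : ℝ) :
    B φ t = ⨆ n, ‖U φ t (sel φ n t)‖ₑ := by
  apply le_antisymm
  · apply iSup_le
    have hc : Continuous fun x => ‖U φ t x‖ₑ :=
      ((U_cont hφ).comp (by fun_prop : Continuous fun x : ℝ => (t, x))).enorm
    have hcl : IsClosed {x | ‖U φ t x‖ₑ ≤ ⨆ n, ‖U φ t (sel φ n t)‖ₑ} := isClosed_le hc continuous_const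
    have hd := TopologicalSpace.denseRange_denseSeq ℝ
    intro x
    have := hd.closure_range
    have hx : x ∈ closure (range (TopologicalSpace.denseSeq ℝ)) := by rw [this]; trivial
    refine closure_minimal ?_ hcl hx
    rintro _ ⟨n, rfl⟩
    refine le_trans ?_ (le_iSup (fun n => ‖U φ t (sel φ n t)‖ₑ) n)
    rw [enorm_le_iff_norm_le]
    exact sel_ge φ n t
  · apply iSup_le
    intro n
    exact le_B _ _ _

/-- Endpoint estimate `L⁴_t L^∞_x`. -/
lemma endpoint {φ : ℝ → ℂ} (hφ : Integrable φ) : ∫⁻ t, B φ t ^ 4 ≤ 640 ^ 2 * W φ ^ 2 := by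
  have hmono : ∀ t, Monotone fun n => ‖U φ t (sel φ n t)‖ₑ := by
    intro t
    apply monotone_nat_of_le_succ
    intro n
    rw [enorm_le_iff_norm_le]
    exact sel_mono φ n t
  have e : ∀ t, B φ t ^ 4 = ⨆ n, ‖U φ t (sel φ n t)‖ₑ ^ 4 := by
    intro t
    rw [B_eq_sel hφ, ENNReal.iSup_pow_of_ne_zero (by norm_num)]
  simp_rw [e]
  rw [lintegral_iSup]
  · apply iSup_le
    intro n
    have hU : (⋃ n : ℕ, Icc (-(n:ℝ)) n) = univ := by
      ext x
      simp only [mem_iUnion, mem_univ, iff_true, mem_Icc]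
      obtain ⟨n, hn⟩ := exists_nat_ge |x|
      exact ⟨n, abs_le.1 hn⟩
    rw [← setLIntegral_univ, ← hU, setLIntegral_iUnion_of_directed]
    · apply iSup_le
      intro m
      exact L4_select hφ _ (sel_meas hφ n) m
    · apply Monotone.directed_le
      intro m n hmn
      apply Icc_subset_Icc
      · simp only [neg_le_neg_iff]; exact_mod_cast hmn
      · exact_mod_cast hmn
  · intro n
    exact (((U_cont hφ).measurable.comp (measurable_id.prodMk (sel_meas hφ n))).enorm).pow_const 4
  · intro m n hmn t
    exact pow_le_pow_left₀ zero_le (hmono t hmn) 4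



lemma mink_finset {α ι : Type*} [MeasurableSpace α] {μ : Measure α} {p : ℝ} (hp : 1 ≤ p)
    (f : ι → α → ℝ≥0∞) (hf : ∀ i, AEMeasurable (f i) μ) (s : Finset ι) :
    (∫⁻ x, (∑ i ∈ s, f i x) ^ p ∂μ) ^ (1 / p) ≤ ∑ i ∈ s, (∫⁻ x, f i x ^ p ∂μ) ^ (1 / p) := by
  classical
  have hp0 : 0 < p := by linarith
  induction s using Finset.induction_on with
  | empty => simp [hp0]
  | insert a s ha ih =>
    rw [Finset.sum_insert ha]
    have := ENNReal.lintegral_Lp_add_le (hf a) (s.aemeasurable_fun_sum (fun i _ => hf i)) hp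
    calc _ = (∫⁻ x, (f a + fun x => ∑ i ∈ s, f i x) x ^ p ∂μ) ^ (1 / p) := by
          simp_rw [Finset.sum_insert ha]; rfl
      _ ≤ _ := this
      _ ≤ _ := by gcongr

/-- Minkowski's inequality for countable sums. -/
lemma mink {α ι : Type*} [MeasurableSpace α] [Countable ι] {μ : Measure α} {p : ℝ} (hp : 1 ≤ p)
    (f : ι → α → ℝ≥0∞) (hf : ∀ i, AEMeasurable (f i) μ) :
    (∫⁻ x, (∑' i, f i x) ^ p ∂μ) ^ (1 / p) ≤ ∑' i, (∫⁻ x, f i x ^ p ∂μ) ^ (1 / p) := by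
  have hp0 : 0 < p := by linarith
  have hpow : ∀ x, (∑' i, f i x) ^ p = ⨆ s : Finset ι, (∑ i ∈ s, f i x) ^ p := by
    intro x
    rw [ENNReal.tsum_eq_iSup_sum]
    exact (ENNReal.orderIsoRpow p hp0).map_iSup _
  simp_rw [hpow]
  rw [lintegral_iSup_directed]
  · have h2 : (⨆ s : Finset ι, ∫⁻ x, (∑ i ∈ s, f i x) ^ p ∂μ) ^ (1 / p)
        = ⨆ s : Finset ι, (∫⁻ x, (∑ i ∈ s, f i x) ^ p ∂μ) ^ (1 / p) :=
      (ENNReal.orderIsoRpow (1 / p) (by positivity)).map_iSup _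
    rw [h2]
    apply iSup_le
    intro s
    exact (mink_finset hp f hf s).trans (ENNReal.sum_le_tsum s)
  · intro s
    exact (s.aemeasurable_fun_sum (fun i _ => hf i)).pow_const p
  · apply Monotone.directed_le
    intro s t hst x
    apply ENNReal.rpow_le_rpow _ hp0.le
    exact Finset.sum_le_sum_of_subset hst

/-- Bilinear estimate for two pieces, in abstract form. -/
lemma pair_est (f g : ℝ → ℝ → ℝ≥0∞) (hf : ∀ t, Measurable (f t)) (hg : ∀ t, Measurable (g t))
    (Bf Bg : ℝ → ℝ≥0∞) (hBf : Measurable Bf) (hBg : Measurable Bg)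
    (hfB : ∀ t x, f t x ≤ Bf t) (hgB : ∀ t x, g t x ≤ Bg t)
    (P Q X Y : ℝ≥0∞) (hP : ∀ t, ∫⁻ x, f t x ^ 2 ≤ P) (hQ : ∀ t, ∫⁻ x, g t x ^ 2 ≤ Q)
    (hX : ∫⁻ t, Bf t ^ 4 ≤ X) (hY : ∫⁻ t, Bg t ^ 4 ≤ Y)
    (p l α β : ℝ) (hl : 0 ≤ l) (hα : 0 ≤ α) (hβ : 0 ≤ β) (hαβ : α + β = 2) (hαp : α ≤ p) (hβp : β ≤ p)
    (hl4 : (p - 1) * l = 2) :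
    ∫⁻ t, (∫⁻ x, (f t x * g t x) ^ p) ^ l ≤
      X ^ ((p - α) * l / 4) * Y ^ ((p - β) * l / 4) * (P ^ (α / 2) * Q ^ (β / 2)) ^ l := by
  have step1 : ∀ t, ∫⁻ x, (f t x * g t x) ^ p ≤
      Bf t ^ (p - α) * Bg t ^ (p - β) * (P ^ (α / 2) * Q ^ (β / 2)) := by
    intro t
    calc ∫⁻ x, (f t x * g t x) ^ p
        ≤ ∫⁻ x, (Bf t ^ (p - α) * Bg t ^ (p - β)) * ((f t x ^ 2) ^ (α / 2) * (g t x ^ 2) ^ (β / 2)) := by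
          apply lintegral_mono; intro x
          simp only
          rw [ENNReal.mul_rpow_of_nonneg _ _ (by linarith)]
          have e1 : f t x ^ p ≤ Bf t ^ (p - α) * (f t x ^ 2) ^ (α / 2) := by
            calc f t x ^ p = f t x ^ (p - α) * f t x ^ α := by
                  rw [← ENNReal.rpow_add_of_nonneg _ _ (by linarith) hα]; congr 1; ring
              _ = f t x ^ (p - α) * (f t x ^ 2) ^ (α / 2) := by
                  rw [← ENNReal.rpow_natCast, ← ENNReal.rpow_mul]; congr 2; push_cast; ring
              _ ≤ _ := by
                  exact mul_le_mul' (ENNReal.rpow_le_rpow (hfB t x) (by linarith)) le_rfl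
          have e2 : g t x ^ p ≤ Bg t ^ (p - β) * (g t x ^ 2) ^ (β / 2) := by
            calc g t x ^ p = g t x ^ (p - β) * g t x ^ β := by
                  rw [← ENNReal.rpow_add_of_nonneg _ _ (by linarith) hβ]; congr 1; ring
              _ = g t x ^ (p - β) * (g t x ^ 2) ^ (β / 2) := by
                  rw [← ENNReal.rpow_natCast, ← ENNReal.rpow_mul]; congr 2; push_cast; ring
              _ ≤ _ := by
                  exact mul_le_mul' (ENNReal.rpow_le_rpow (hgB t x) (by linarith)) le_rfl
          calc _ ≤ _ := mul_le_mul' e1 e2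
            _ = _ := by ring
      _ = (Bf t ^ (p - α) * Bg t ^ (p - β)) * ∫⁻ x, ((f t x ^ 2) ^ (α / 2) * (g t x ^ 2) ^ (β / 2)) := by
          rw [lintegral_const_mul]
          exact (((hf t).pow_const 2).pow_const _).mul (((hg t).pow_const 2).pow_const _)
      _ ≤ (Bf t ^ (p - α) * Bg t ^ (p - β)) * ((∫⁻ x, f t x ^ 2) ^ (α / 2) * (∫⁻ x, g t x ^ 2) ^ (β / 2)) := by
          gcongr
          exact ENNReal.lintegral_mul_norm_pow_le ((hf t).pow_const 2).aemeasurable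
            ((hg t).pow_const 2).aemeasurable (by linarith) (by linarith) (by linarith)
      _ ≤ _ := by
          gcongr
          · exact hP t
          · exact hQ t
  calc ∫⁻ t, (∫⁻ x, (f t x * g t x) ^ p) ^ l
      ≤ ∫⁻ t, (Bf t ^ (p - α) * Bg t ^ (p - β) * (P ^ (α / 2) * Q ^ (β / 2))) ^ l := by
        apply lintegral_mono; intro t
        exact ENNReal.rpow_le_rpow (step1 t) hl
    _ = ∫⁻ t, ((Bf t ^ 4) ^ ((p - α) * l / 4) * (Bg t ^ 4) ^ ((p - β) * l / 4)) * (P ^ (α / 2) * Q ^ (β / 2)) ^ l := by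
        congr 1; ext t
        rw [ENNReal.mul_rpow_of_nonneg _ _ hl, ENNReal.mul_rpow_of_nonneg _ _ hl]
        congr 2
        · rw [← ENNReal.rpow_natCast, ← ENNReal.rpow_mul, ← ENNReal.rpow_mul]; congr 1; push_cast; ring
        · rw [← ENNReal.rpow_natCast, ← ENNReal.rpow_mul, ← ENNReal.rpow_mul]; congr 1; push_cast; ring
    _ = (∫⁻ t, ((Bf t ^ 4) ^ ((p - α) * l / 4) * (Bg t ^ 4) ^ ((p - β) * l / 4))) * (P ^ (α / 2) * Q ^ (β / 2)) ^ l := by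
        rw [lintegral_mul_const]
        exact ((hBf.pow_const 4).pow_const _).mul ((hBg.pow_const 4).pow_const _)
    _ ≤ ((∫⁻ t, Bf t ^ 4) ^ ((p - α) * l / 4) * (∫⁻ t, Bg t ^ 4) ^ ((p - β) * l / 4)) * (P ^ (α / 2) * Q ^ (β / 2)) ^ l := by
        gcongr
        refine ENNReal.lintegral_mul_norm_pow_le (hBf.pow_const 4).aemeasurable
            (hBg.pow_const 4).aemeasurable ?_ ?_ ?_
        · have : 0 ≤ p - α := by linarith
          positivity
        · have : 0 ≤ p - β := by linarith
          positivity
        · have : β = 2 - α := by linarith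
          rw [this]; linarith
    _ ≤ _ := by
        have h1 : 0 ≤ p - α := by linarith
        have h2 : 0 ≤ p - β := by linarith
        gcongr

/-- The constants in the bilinear estimate. -/
lemma pair_const (D a b : ℝ≥0∞) (k j q p l ε : ℝ) (hD : D ≠ ∞) (hD1 : 1 ≤ D) (hq : 4 < q) (hpq : p = q / (q - 4))
    (hl : l = (q - 4) / 2) (hε0 : 0 ≤ ε) (hε1 : ε ≤ 1) (hεp : 1 + ε ≤ p) :
    ((D * 2 ^ (-k) * a ^ 2) ^ ((p - (1 + ε)) * l / 4) * (D * 2 ^ (-j) * b ^ 2) ^ ((p - (1 - ε)) * l / 4)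
      * ((D * a) ^ ((1 + ε) / 2) * (D * b) ^ ((1 - ε) / 2)) ^ l) ^ (2 / q)
    ≤ D * (2 ^ (ε * (q - 4) / (4 * q) * (k - j)) * ((2 ^ (-(2 * k / q)) * a) ^ (1/2 : ℝ) * (2 ^ (-(2 * j / q)) * b) ^ (1/2 : ℝ))) := by
  have hq4 : 0 < q - 4 := by linarith
  have hq0 : 0 < q := by linarith
  have hl0 : 0 < l := by rw [hl]; linarith
  have hpl : p * l = q / 2 := by rw [hpq, hl]; field_simp
  have h2 : (2 : ℝ≥0∞) ≠ 0 := by norm_num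
  have h2' : (2 : ℝ≥0∞) ≠ ∞ := by norm_num
  set m := (p - (1 + ε)) * l / 4 with hm
  set n := (p - (1 - ε)) * l / 4 with hn
  have hm0 : 0 ≤ m := by
    have : 0 ≤ p - (1 + ε) := by linarith
    positivity
  have hn0 : 0 ≤ n := by
    have : 0 ≤ p - (1 - ε) := by linarith
    positivity
  have hq2 : 0 ≤ 2 / q := by positivity
  have hε1' : 0 ≤ 1 - ε := by linarith
  have hD0 : D ≠ 0 := by
    intro h; rw [h] at hD1; simp at hD1
  have s1 : ∀ (a : ℝ≥0∞) (k m ε' : ℝ), 0 ≤ m → 0 ≤ ε' → 2 * m + ε' / 2 * l = q / 4 →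
      (D * 2 ^ (-k) * a ^ 2) ^ m * ((D * a) ^ (ε' / 2)) ^ l = D ^ (m + ε' / 2 * l) * 2 ^ (-k * m) * a ^ (q / 4) := by
    intro a k m ε' hm hε hma
    rw [ENNReal.mul_rpow_of_nonneg _ _ hm, ENNReal.mul_rpow_of_nonneg _ _ hm, ← ENNReal.rpow_mul,
      ENNReal.mul_rpow_of_nonneg _ _ (by positivity),
      ENNReal.mul_rpow_of_nonneg _ _ hl0.le, ← ENNReal.rpow_natCast, ← ENNReal.rpow_mul,
      ← ENNReal.rpow_mul, ← ENNReal.rpow_mul, ← hma,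
      ENNReal.rpow_add _ _ hD0 hD, ENNReal.rpow_add_of_nonneg _ _ (by positivity) (by positivity)]
    push_cast
    ring
  have hma : 2 * m + (1 + ε) / 2 * l = q / 4 := by
    rw [hm]; linear_combination (1/2) * hpl
  have hna : 2 * n + (1 - ε) / 2 * l = q / 4 := by
    rw [hn]; linear_combination (1/2) * hpl
  have e : (D * 2 ^ (-k) * a ^ 2) ^ m * (D * 2 ^ (-j) * b ^ 2) ^ n
      * ((D * a) ^ ((1 + ε) / 2) * (D * b) ^ ((1 - ε) / 2)) ^ l
      = D ^ (m + n + l) * 2 ^ (-k * m - j * n) * (a ^ (q / 4) * b ^ (q / 4)) := by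
    rw [ENNReal.mul_rpow_of_nonneg _ _ hl0.le]
    calc _ = ((D * 2 ^ (-k) * a ^ 2) ^ m * ((D * a) ^ ((1 + ε) / 2)) ^ l) *
          ((D * 2 ^ (-j) * b ^ 2) ^ n * ((D * b) ^ ((1 - ε) / 2)) ^ l) := by ring
      _ = _ := by
        rw [s1 a k m (1 + ε) hm0 (by linarith) hma, s1 b j n (1 - ε) hn0 hε1' hna]
        have e1 : D ^ (m + n + l) = D ^ (m + (1 + ε) / 2 * l) * D ^ (n + (1 - ε) / 2 * l) := by
          rw [← ENNReal.rpow_add _ _ hD0 hD]; congr 1; ring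
        have e2 : (2 : ℝ≥0∞) ^ (-k * m - j * n) = 2 ^ (-k * m) * 2 ^ (-j * n) := by
          rw [← ENNReal.rpow_add _ _ h2 h2']; congr 1; ring
        rw [e1, e2]; ring
  rw [e, ENNReal.mul_rpow_of_nonneg _ _ hq2, ENNReal.mul_rpow_of_nonneg _ _ hq2,
    ENNReal.mul_rpow_of_nonneg _ _ hq2, ← ENNReal.rpow_mul, ← ENNReal.rpow_mul, ← ENNReal.rpow_mul,
    ← ENNReal.rpow_mul, ENNReal.mul_rpow_of_nonneg _ _ (by norm_num : (0:ℝ) ≤ 1/2),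
    ENNReal.mul_rpow_of_nonneg _ _ (by norm_num : (0:ℝ) ≤ 1/2), ← ENNReal.rpow_mul, ← ENNReal.rpow_mul]
  have e3 : q / 4 * (2 / q) = 1 / 2 := by field_simp; norm_num
  rw [e3]
  have e4 : D ^ ((m + n + l) * (2 / q)) ≤ D := by
    calc _ ≤ D ^ (1 : ℝ) := by
          apply ENNReal.rpow_le_rpow_of_exponent_le hD1
          rw [mul_div_assoc', div_le_one hq0]
          have : m + n = 1 / 2 * (p * l) - l / 2 := by rw [hm, hn]; ring
          have hmn : m + n + l = q / 4 + l / 2 := by rw [this, hpl]; ring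
          rw [hmn, hl]; linarith
      _ = D := ENNReal.rpow_one D
  have e5 : (2 : ℝ≥0∞) ^ ((-k * m - j * n) * (2 / q)) =
      2 ^ (ε * (q - 4) / (4 * q) * (k - j)) * (2 ^ (-(2 * k / q) * (1 / 2)) * 2 ^ (-(2 * j / q) * (1 / 2))) := by
    rw [← ENNReal.rpow_add _ _ h2 h2', ← ENNReal.rpow_add _ _ h2 h2']
    congr 1
    have hm' : m = 1 / 2 - ε * (q - 4) / 8 := by
      have : m = (p * l) / 4 - l / 4 - ε * l / 4 := by rw [hm]; ring
      rw [this, hpl, hl]; ring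
    have hn' : n = 1 / 2 + ε * (q - 4) / 8 := by
      have : n = (p * l) / 4 - l / 4 + ε * l / 4 := by rw [hn]; ring
      rw [this, hpl, hl]; ring
    rw [hm', hn']
    field_simp
    ring
  rw [e5]
  calc _ ≤ D * (2 ^ (ε * (q - 4) / (4 * q) * (k - j)) * (2 ^ (-(2 * k / q) * (1 / 2)) * 2 ^ (-(2 * j / q) * (1 / 2)))) *
        (a ^ (1/2 : ℝ) * b ^ (1/2 : ℝ)) := by gcongr
    _ = _ := by ring



/-- Dyadic frequency shells. -/
def sh (k : ℤ) : Set ℝ := {ξ | (2 : ℝ) ^ k ≤ |ξ| ∧ |ξ| < (2 : ℝ) ^ (k + 1)}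

lemma sh_meas (k : ℤ) : MeasurableSet (sh k) := by
  unfold sh
  have h : Measurable fun ξ : ℝ => |ξ| := by fun_prop
  exact (measurableSet_le measurable_const h).inter (measurableSet_lt h measurable_const)

lemma sh_disj : Pairwise (Function.onFun Disjoint sh) := by
  have key : ∀ k j : ℤ, k < j → Disjoint (sh k) (sh j) := by
    intro k j h
    rw [Set.disjoint_left]
    rintro ξ ⟨_, h2⟩ ⟨h3, _⟩
    have : (2 : ℝ) ^ (k + 1) ≤ 2 ^ j := zpow_le_zpow_right₀ (by norm_num) h
    linarith
  intro k j hkj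
  rcases lt_or_gt_of_ne hkj with h | h
  · exact key k j h
  · exact (key j k h).symm

lemma sh_union : (⋃ k, sh k) = {0}ᶜ := by
  ext ξ
  simp only [mem_iUnion, mem_compl_iff, mem_singleton_iff]
  constructor
  · rintro ⟨k, hk, _⟩ h
    rw [h, abs_zero] at hk
    have : (0:ℝ) < 2 ^ k := by positivity
    linarith
  · intro h
    obtain ⟨n, hn⟩ := exists_mem_Ico_zpow (abs_pos.2 h) (one_lt_two)
    exact ⟨n, hn.1, hn.2⟩

/-- Dyadic pieces. -/
def dp (φ : ℝ → ℂ) (k : ℤ) : ℝ → ℂ := (sh k).indicator φ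

lemma dp_int {φ : ℝ → ℂ} (hφ : Integrable φ) (k : ℤ) : Integrable (dp φ k) :=
  hφ.indicator (sh_meas k)

lemma dp_mem {φ : ℝ → ℂ} (hφ : MemLp φ 2) (k : ℤ) : MemLp (dp φ k) 2 :=
  hφ.indicator (sh_meas k)

lemma U_le_tsum {φ : ℝ → ℂ} (hφ : Integrable φ) (t x : ℝ) :
    ‖U φ t x‖ₑ ≤ ∑' k, ‖U (dp φ k) t x‖ₑ := by
  have h1 : U φ t x = ∫ ξ in ⋃ k, sh k, ph t x ξ * φ ξ := by
    rw [sh_union, U]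
    rw [Measure.restrict_eq_self_of_ae_mem]
    have : ∀ᵐ s : ℝ, s ≠ 0 := by simp [ae_iff]
    filter_upwards [this] with s hs
    exact hs
  have h2 := hasSum_integral_iUnion (μ := volume) (f := fun ξ => ph t x ξ * φ ξ) sh_meas sh_disj
    (ph_integrable hφ t x).integrableOn
  have h3 : ∀ k, ∫ ξ in sh k, ph t x ξ * φ ξ = U (dp φ k) t x := by
    intro k
    rw [U, ← integral_indicator (sh_meas k)]
    congr 1; ext ξ
    by_cases h : ξ ∈ sh k <;> simp [dp, h]
  rw [← h1] at h2
  simp_rw [h3] at h2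
  rw [← h2.tsum_eq]
  exact enorm_tsum_le_tsum_enorm

/-- Mass of a dyadic piece. -/
def am (φ : ℝ → ℂ) (k : ℤ) : ℝ≥0∞ := ∫⁻ ξ, ‖dp φ k ξ‖ₑ ^ 2

lemma eLpNorm_two_sq (f : ℝ → ℂ) : eLpNorm f 2 volume ^ 2 = ∫⁻ x, ‖f x‖ₑ ^ 2 := by
  rw [eLpNorm_eq_lintegral_rpow_enorm_toReal (by norm_num) (by norm_num), ← ENNReal.rpow_natCast,
    ← ENNReal.rpow_mul]
  norm_num

lemma U_sq {φ : ℝ → ℂ} (h1 : Integrable φ) (h2 : MemLp φ 2) (t : ℝ) :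
    ∫⁻ x, ‖U φ t x‖ₑ ^ 2 ≤ 10 ^ 6 * ∫⁻ ξ, ‖φ ξ‖ₑ ^ 2 := by
  rw [← eLpNorm_two_sq, ← eLpNorm_two_sq]
  calc _ ≤ (ENNReal.ofReal (2 * Real.pi) * eLpNorm φ 2 volume) ^ 2 := by
        gcongr; exact U_L2 h1 h2 t
    _ = ENNReal.ofReal (2 * Real.pi) ^ 2 * eLpNorm φ 2 volume ^ 2 := by ring
    _ ≤ _ := by
        refine mul_le_mul' ?_ le_rfl
        calc ENNReal.ofReal (2 * Real.pi) ^ 2 ≤ 10 ^ 2 := by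
              gcongr
              rw [ENNReal.ofReal_le_iff_le_toReal (by norm_num)]
              have := Real.pi_lt_four
              norm_num; linarith
          _ ≤ 10 ^ 6 := by norm_num

lemma two_rpow_ofReal (s : ℝ) : (2 : ℝ≥0∞) ^ s = ENNReal.ofReal ((2 : ℝ) ^ s) := by
  rw [← ENNReal.ofReal_rpow_of_pos (by norm_num)]; norm_num

lemma dp_W (φ : ℝ → ℂ) (k : ℤ) : W (dp φ k) ≤ 2 ^ (-(k : ℝ) / 2) * am φ k := by
  unfold W am
  rw [← lintegral_const_mul' _ _ (by simp [two_rpow_ofReal])]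
  apply lintegral_mono; intro ξ
  simp only
  rw [mul_comm]
  by_cases h : ξ ∈ sh k
  · gcongr
    rw [two_rpow_ofReal]
    apply ENNReal.ofReal_le_ofReal
    have h2 : (0:ℝ) < 2 ^ k := by positivity
    calc |ξ| ^ (-(1/2) : ℝ) ≤ ((2:ℝ) ^ k) ^ (-(1/2) : ℝ) :=
          Real.rpow_le_rpow_of_nonpos h2 h.1 (by norm_num)
      _ = _ := by
          rw [← Real.rpow_intCast, ← Real.rpow_mul (by norm_num)]
          congr 1; ring
  · simp [dp, h]

lemma dp_B {φ : ℝ → ℂ} (hφ : Integrable φ) (k : ℤ) :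
    ∫⁻ t, B (dp φ k) t ^ 4 ≤ 10 ^ 6 * 2 ^ (-(k : ℝ)) * am φ k ^ 2 := by
  calc _ ≤ 640 ^ 2 * W (dp φ k) ^ 2 := endpoint (dp_int hφ k)
    _ ≤ 10 ^ 6 * (2 ^ (-(k : ℝ) / 2) * am φ k) ^ 2 := by
        refine mul_le_mul' (by norm_num) ?_
        gcongr
        exact dp_W φ k
    _ = _ := by
        rw [mul_pow, ← ENNReal.rpow_natCast (2 ^ (-(k:ℝ)/2)), ← ENNReal.rpow_mul, mul_assoc]
        congr 4; push_cast; ring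

/-- The rescaled dyadic masses. -/
def cm (q : ℝ) (φ : ℝ → ℂ) (k : ℤ) : ℝ≥0∞ := 2 ^ (-(2 * (k : ℝ) / q)) * am φ k

lemma cm_sum (q : ℝ) (hq : 4 < q) (φ : ℝ → ℂ) :
    ∑' k, cm q φ k ≤ 2 * ∫⁻ ξ, ‖φ ξ‖ₑ ^ 2 * ENNReal.ofReal (|ξ| ^ (-(2 / q))) := by
  have h1 : ∀ k, cm q φ k ≤ 2 * ∫⁻ ξ in sh k, ‖φ ξ‖ₑ ^ 2 * ENNReal.ofReal (|ξ| ^ (-(2 / q))) := by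
    intro k
    unfold cm am
    rw [← lintegral_const_mul' _ _ (by simp [two_rpow_ofReal]), ← lintegral_const_mul' _ _ (by norm_num),
      ← lintegral_indicator (sh_meas k)]
    apply lintegral_mono; intro ξ
    simp only
    by_cases h : ξ ∈ sh k
    · have h2 : (0:ℝ) < 2 ^ k := by positivity
      have hξ : 0 < |ξ| := h2.trans_le h.1
      rw [indicator_of_mem h, dp, indicator_of_mem h]
      have : (2 : ℝ≥0∞) ^ (-(2 * (k : ℝ) / q)) ≤ 2 * ENNReal.ofReal (|ξ| ^ (-(2 / q))) := by
        rw [two_rpow_ofReal, show (2 : ℝ≥0∞) = ENNReal.ofReal 2 by norm_num, ← ENNReal.ofReal_mul (by norm_num)]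
        apply ENNReal.ofReal_le_ofReal
        have hq0 : 0 < q := by linarith
        calc (2:ℝ) ^ (-(2 * (k : ℝ) / q)) = 2 ^ (2 / q) * ((2:ℝ) ^ (k + 1)) ^ (-(2 / q)) := by
              rw [← Real.rpow_intCast, ← Real.rpow_mul (by norm_num), ← Real.rpow_add (by norm_num)]
              congr 1; push_cast; ring
          _ ≤ 2 * |ξ| ^ (-(2 / q)) := by
              apply mul_le_mul _ _ (by positivity) (by norm_num)
              · calc (2:ℝ) ^ (2 / q) ≤ 2 ^ (1:ℝ) := by
                      apply Real.rpow_le_rpow_of_exponent_le (by norm_num)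
                      rw [div_le_one hq0]; linarith
                  _ = 2 := by norm_num
              · apply Real.rpow_le_rpow_of_nonpos hξ h.2.le
                have : 0 < 2 / q := by positivity
                linarith
      calc _ ≤ (2 * ENNReal.ofReal (|ξ| ^ (-(2 / q)))) * ‖φ ξ‖ₑ ^ 2 := by gcongr
        _ = _ := by ring
    · simp [dp, h]
  calc _ ≤ ∑' k, 2 * ∫⁻ ξ in sh k, ‖φ ξ‖ₑ ^ 2 * ENNReal.ofReal (|ξ| ^ (-(2 / q))) := ENNReal.tsum_le_tsum h1
    _ = 2 * ∫⁻ ξ in ⋃ k, sh k, ‖φ ξ‖ₑ ^ 2 * ENNReal.ofReal (|ξ| ^ (-(2 / q))) := by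
        rw [ENNReal.tsum_mul_left, lintegral_iUnion sh_meas sh_disj]
    _ ≤ _ := by
        refine mul_le_mul' le_rfl ?_
        exact setLIntegral_le_lintegral _ _

/-- Off-diagonal decay weights. -/
def ew (σ : ℝ) (n : ℤ) : ℝ≥0∞ := 2 ^ (-(σ * |(n : ℝ)|))

lemma ew_sum {σ : ℝ} (hσ : 0 < σ) : ∑' n, ew σ n ≠ ∞ := by
  have h1 : ∀ n, ew σ n = ENNReal.ofReal (((2:ℝ) ^ (-σ)) ^ n.natAbs) := by
    intro n
    rw [ew, two_rpow_ofReal, ← Real.rpow_natCast, ← Real.rpow_mul (by norm_num)]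
    congr 2
    rw [Nat.cast_natAbs]; push_cast; ring
  simp_rw [h1]
  apply Summable.tsum_ofReal_ne_top
  have hg : Summable fun n : ℕ => ((2:ℝ) ^ (-σ)) ^ n := by
    apply summable_geometric_of_lt_one (by positivity)
    exact Real.rpow_lt_one_of_one_lt_of_neg (by norm_num) (by linarith)
  apply Summable.of_nat_of_neg
  · simpa using hg
  · simpa using hg

lemma sqrt_mul_le (x y : ℝ≥0∞) : x ^ (1/2 : ℝ) * y ^ (1/2 : ℝ) ≤ x + y := by
  calc _ ≤ (x + y) ^ (1/2 : ℝ) * (x + y) ^ (1/2 : ℝ) := by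
        gcongr
        · exact le_self_add
        · exact le_add_self
    _ = _ := by rw [← ENNReal.rpow_add_of_nonneg _ _ (by norm_num) (by norm_num)]; norm_num

lemma schur (σ : ℝ) (c : ℤ → ℝ≥0∞) :
    ∑' z : ℤ × ℤ, ew σ (z.1 - z.2) * (c z.1 + c z.2) ≤ 2 * (∑' n, ew σ n) * ∑' k, c k := by
  have hs : ∀ n, ew σ (-n) = ew σ n := by intro n; simp [ew]
  have e1 : ∀ k, ∑' j, ew σ (k - j) = ∑' n, ew σ n := fun k =>
    (Equiv.subLeft k).tsum_eq (ew σ)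
  have e2 : ∀ j, ∑' k, ew σ (k - j) = ∑' n, ew σ n := fun j =>
    (Equiv.subRight j).tsum_eq (ew σ)
  simp_rw [mul_add]
  rw [ENNReal.tsum_add, ENNReal.tsum_prod', ENNReal.tsum_prod']
  have e3 : ∑' (k : ℤ) (j : ℤ), ew σ (k - j) * c k = (∑' n, ew σ n) * ∑' k, c k := by
    simp_rw [ENNReal.tsum_mul_right, e1, ENNReal.tsum_mul_left]
  have e4 : ∑' (k : ℤ) (j : ℤ), ew σ (k - j) * c j = (∑' n, ew σ n) * ∑' k, c k := by
    rw [ENNReal.tsum_comm]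
    simp_rw [ENNReal.tsum_mul_right, e2, ENNReal.tsum_mul_left]
  simp only
  rw [e3, e4]
  apply le_of_eq; ring

lemma pair_bound {φ : ℝ → ℂ} (h1 : Integrable φ) (h2 : MemLp φ 2) (q p l ε : ℝ) (hq : 4 < q)
    (hpq : p = q / (q - 4)) (hl : l = (q - 4) / 2) (hε0 : 0 ≤ ε) (hε1 : ε ≤ 1) (hεp : 1 + ε ≤ p)
    (k j : ℤ) :
    (∫⁻ t, (∫⁻ x, (‖U (dp φ k) t x‖ₑ * ‖U (dp φ j) t x‖ₑ) ^ p) ^ l) ^ (2 / q) ≤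
      10 ^ 6 * (ew (ε * (q - 4) / (4 * q)) (k - j) * (cm q φ k + cm q φ j)) := by
  have hUm : ∀ (k : ℤ) (t : ℝ), Measurable fun x => ‖U (dp φ k) t x‖ₑ := by
    intro k t
    exact ((U_cont (dp_int h1 k)).comp (by fun_prop : Continuous fun x : ℝ => (t, x))).enorm.measurable
  have hq4 : 0 < q - 4 := by linarith
  have hl0 : 0 ≤ l := by rw [hl]; linarith
  have hpl : (p - 1) * l = 2 := by rw [hpq, hl]; field_simp; ring
  have main : ∀ k j : ℤ, k ≤ j →
      (∫⁻ t, (∫⁻ x, (‖U (dp φ k) t x‖ₑ * ‖U (dp φ j) t x‖ₑ) ^ p) ^ l) ^ (2 / q) ≤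
      10 ^ 6 * (ew (ε * (q - 4) / (4 * q)) (k - j) * (cm q φ k + cm q φ j)) := by
    intro k j hkj
    have h := pair_est (fun t x => ‖U (dp φ k) t x‖ₑ) (fun t x => ‖U (dp φ j) t x‖ₑ) (hUm k) (hUm j)
      (B (dp φ k)) (B (dp φ j)) (B_meas (dp_int h1 k)) (B_meas (dp_int h1 j)) (le_B _) (le_B _)
      (10 ^ 6 * am φ k) (10 ^ 6 * am φ j) _ _ (U_sq (dp_int h1 k) (dp_mem h2 k))
      (U_sq (dp_int h1 j) (dp_mem h2 j)) (dp_B h1 k) (dp_B h1 j) p l (1 + ε) (1 - ε) hl0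
      (by linarith) (by linarith) (by ring) hεp (by linarith) hpl
    calc _ ≤ _ := ENNReal.rpow_le_rpow h (by positivity)
      _ ≤ _ := pair_const (10 ^ 6) (am φ k) (am φ j) k j q p l ε (by norm_num) (by norm_num) hq hpq hl hε0 hε1 hεp
      _ ≤ _ := by
        have e : (2 : ℝ≥0∞) ^ (ε * (q - 4) / (4 * q) * ((k : ℝ) - j)) = ew (ε * (q - 4) / (4 * q)) (k - j) := by
          rw [ew]
          congr 1
          have : ((k : ℝ) - j) ≤ 0 := by
            have : (k : ℝ) ≤ j := by exact_mod_cast hkj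
            linarith
          push_cast
          rw [abs_of_nonpos this]; ring
        rw [e]
        gcongr
        exact sqrt_mul_le (cm q φ k) (cm q φ j)
  rcases le_total k j with h | h
  · exact main k j h
  · have := main j k h
    have e : ew (ε * (q - 4) / (4 * q)) (k - j) = ew (ε * (q - 4) / (4 * q)) (j - k) := by
      unfold ew; congr 3; push_cast; rw [abs_sub_comm]
    rw [e, add_comm (cm q φ k)]
    simp_rw [mul_comm (‖U (dp φ k) _ _‖ₑ)]
    exact this


lemma strich_aux {φ : ℝ → ℂ} (h1 : Integrable φ) (h2 : MemLp φ 2) (q p l ε σ : ℝ) (hq : 4 < q)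
    (hp : p = q / (q - 4)) (hl : l = (q - 4) / 2) (hε0 : 0 ≤ ε) (hε1 : ε ≤ 1) (hεp : 1 + ε ≤ p)
    (hp1 : 1 < p) (hσ : σ = ε * (q - 4) / (4 * q)) :
    (∫⁻ t, (∫⁻ x, ‖U φ t x‖ₑ ^ (2 * q / (q - 4))) ^ l) ^ (2 / q) ≤
      10 ^ 6 * (2 * (∑' n, ew σ n) * 2) * ∫⁻ ξ, ‖φ ξ‖ₑ ^ 2 * ENNReal.ofReal (|ξ| ^ (-(2 / q))) := by
  have hq4 : 0 < q - 4 := by linarith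
  have hq0 : 0 < q := by linarith
  have hl0 : 0 ≤ l := by rw [hl]; positivity
  set u : ℤ → ℝ → ℝ → ℝ≥0∞ := fun k t x => ‖U (dp φ k) t x‖ₑ with hu
  have hum : ∀ k, Measurable fun z : ℝ × ℝ => u k z.1 z.2 := fun k =>
    (U_cont (dp_int h1 k)).enorm.measurable
  have hmul : ∀ z : ℤ × ℤ, Measurable fun w : ℝ × ℝ => u z.1 w.1 w.2 * u z.2 w.1 w.2 :=
    fun z => (hum z.1).mul (hum z.2)
  have hmulx : ∀ (z : ℤ × ℤ) (t : ℝ), Measurable fun x => u z.1 t x * u z.2 t x := fun z t =>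
    (hmul z).comp (g := fun w : ℝ × ℝ => u z.1 w.1 w.2 * u z.2 w.1 w.2)
      (f := fun x : ℝ => (t, x)) (by fun_prop)
  set n : ℤ × ℤ → ℝ → ℝ≥0∞ := fun z t => (∫⁻ x, (u z.1 t x * u z.2 t x) ^ p) ^ (1 / p) with hn
  have hnm : ∀ z, Measurable (n z) := by
    intro z
    apply Measurable.pow_const
    exact ((hmul z).pow_const p).lintegral_prod_right'
  have hpt : ∀ t x, ‖U φ t x‖ₑ ^ (2 * q / (q - 4)) ≤ (∑' z : ℤ × ℤ, u z.1 t x * u z.2 t x) ^ p := by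
    intro t x
    have e : (∑' z : ℤ × ℤ, u z.1 t x * u z.2 t x) = (∑' k, u k t x) ^ 2 := by
      rw [ENNReal.tsum_prod (f := fun a b => u a t x * u b t x)]
      simp_rw [ENNReal.tsum_mul_left, ENNReal.tsum_mul_right]
      rw [sq]
    rw [e, ← ENNReal.rpow_natCast, ← ENNReal.rpow_mul]
    rw [show ((2:ℕ):ℝ) * p = 2 * q / (q - 4) by rw [hp]; push_cast; ring]
    exact ENNReal.rpow_le_rpow (U_le_tsum h1 t x) (by positivity)
  have hin : ∀ t, (∫⁻ x, ‖U φ t x‖ₑ ^ (2 * q / (q - 4))) ^ l ≤ (∑' z, n z t) ^ (q / 2) := by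
    intro t
    calc _ ≤ (∫⁻ x, (∑' z : ℤ × ℤ, u z.1 t x * u z.2 t x) ^ p) ^ l := by
          apply ENNReal.rpow_le_rpow _ hl0
          exact lintegral_mono (hpt t)
      _ = ((∫⁻ x, (∑' z : ℤ × ℤ, u z.1 t x * u z.2 t x) ^ p) ^ (1 / p)) ^ (q / 2) := by
          rw [← ENNReal.rpow_mul]; congr 1; rw [hl, hp]; field_simp
      _ ≤ _ := by
          apply ENNReal.rpow_le_rpow _ (by positivity)
          exact mink hp1.le _ (fun z => (hmulx z t).aemeasurable)
  calc _ ≤ (∫⁻ t, (∑' z, n z t) ^ (q / 2)) ^ (1 / (q / 2)) := by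
        rw [show 1 / (q / 2) = 2 / q by field_simp]
        apply ENNReal.rpow_le_rpow _ (by positivity)
        exact lintegral_mono hin
    _ ≤ ∑' z, (∫⁻ t, n z t ^ (q / 2)) ^ (1 / (q / 2)) :=
        mink (by linarith) n (fun z => (hnm z).aemeasurable)
    _ ≤ ∑' z : ℤ × ℤ, 10 ^ 6 * (ew σ (z.1 - z.2) * (cm q φ z.1 + cm q φ z.2)) := by
        apply ENNReal.tsum_le_tsum
        intro z
        have := hσ ▸ pair_bound h1 h2 q p l ε hq hp hl hε0 hε1 hεp z.1 z.2
        refine le_trans (le_of_eq ?_) this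
        rw [show 1 / (q / 2) = 2 / q by field_simp]
        congr 2; ext t
        rw [hn]
        simp only
        rw [← ENNReal.rpow_mul]; congr 1; rw [hl, hp]; field_simp
    _ ≤ 10 ^ 6 * (2 * (∑' n, ew σ n) * ∑' k, cm q φ k) := by
        rw [ENNReal.tsum_mul_left]
        gcongr
        exact schur σ _
    _ ≤ 10 ^ 6 * (2 * (∑' n, ew σ n) * (2 * ∫⁻ ξ, ‖φ ξ‖ₑ ^ 2 * ENNReal.ofReal (|ξ| ^ (-(2 / q))))) := by
        gcongr
        exact cm_sum q hq φ
    _ = _ := by ring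

/-- Intermediate Strichartz estimates. -/
lemma strich_mid (q : ℝ) (hq : 4 < q) : ∃ C : ℝ≥0∞, C ≠ ∞ ∧ ∀ φ : ℝ → ℂ, Integrable φ → MemLp φ 2 →
    (∫⁻ t, (∫⁻ x, ‖U φ t x‖ₑ ^ (2 * q / (q - 4))) ^ ((q - 4) / 2)) ^ (2 / q) ≤
      C * ∫⁻ ξ, ‖φ ξ‖ₑ ^ 2 * ENNReal.ofReal (|ξ| ^ (-(2 / q))) := by
  have hq4 : 0 < q - 4 := by linarith
  have hq0 : 0 < q := by linarith
  obtain ⟨p, hp⟩ : ∃ p, p = q / (q - 4) := ⟨_, rfl⟩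
  have hp1 : 1 < p := by rw [hp, lt_div_iff₀ hq4]; linarith
  obtain ⟨ε, hε⟩ : ∃ ε, ε = min 1 (p - 1) := ⟨_, rfl⟩
  have hε0 : 0 < ε := by rw [hε]; exact lt_min (by norm_num) (by linarith)
  have hε1 : ε ≤ 1 := by rw [hε]; exact min_le_left _ _
  have hεp : 1 + ε ≤ p := by have : ε ≤ p - 1 := (by rw [hε]; exact min_le_right _ _); linarith
  obtain ⟨σ, hσ⟩ : ∃ σ, σ = ε * (q - 4) / (4 * q) := ⟨_, rfl⟩
  have hσ0 : 0 < σ := by rw [hσ]; positivity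
  refine ⟨10 ^ 6 * (2 * (∑' n, ew σ n) * 2), ?_, ?_⟩
  · exact ENNReal.mul_ne_top (by norm_num)
      (ENNReal.mul_ne_top (ENNReal.mul_ne_top (by norm_num) (ew_sum hσ0)) (by norm_num))
  intro φ h1 h2
  exact strich_aux h1 h2 q p _ ε σ hq hp rfl hε0.le hε1 hεp hp1 hσ



lemma unimod_integrable {e f : ℝ → ℂ} (he : Continuous e) (hn : ∀ x, ‖e x‖ = 1)
    (h : Integrable fun x => e x * f x) : Integrable f := by
  have hc : Continuous fun x => (starRingEnd ℂ) (e x) := Complex.continuous_conj.comp he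
  have := h.bdd_mul (c := 1) (f := fun x => (starRingEnd ℂ) (e x)) hc.aestronglyMeasurable
    (by filter_upwards with x; rw [RCLike.norm_conj, hn])
  refine this.congr ?_
  filter_upwards with x
  rw [← mul_assoc, mul_comm ((starRingEnd ℂ) (e x)), Complex.mul_conj, Complex.normSq_eq_norm_sq, hn]
  simp

lemma exp_unimod (s : ℝ) : ‖Complex.exp (-(Complex.I * (s : ℂ)))‖ = 1 := by
  have : -(Complex.I * (s : ℂ)) = ((-s : ℝ) : ℂ) * Complex.I := by push_cast; ring
  rw [this, Complex.norm_exp_ofReal_mul_I]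

lemma ftx_zero {u : ℝ → ℂ} (h : ¬ Integrable u) : ftx u = 0 := by
  ext ξ
  unfold ftx
  apply integral_undef
  intro h'
  exact h (unimod_integrable (e := fun x => Complex.exp (-(Complex.I * ((x * ξ : ℝ) : ℂ))))
    (by fun_prop) (fun x => exp_unimod _) h')

lemma ftx_cont (u : ℝ → ℂ) : Continuous (ftx u) := by
  by_cases h : Integrable u
  · unfold ftx
    apply continuous_of_dominated (bound := fun x => ‖u x‖)
    · intro ξ
      apply AEStronglyMeasurable.mul _ h.aestronglyMeasurable
      exact Continuous.aestronglyMeasurable (by fun_prop)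
    · intro ξ
      filter_upwards with x
      rw [norm_mul, exp_unimod, one_mul]
    · exact h.norm
    · filter_upwards with x
      fun_prop
  · rw [ftx_zero h]; exact continuous_const

lemma ftx_bdd (u : ℝ → ℂ) (ξ : ℝ) : ‖ftx u ξ‖ ≤ ∫ x, ‖u x‖ := by
  unfold ftx
  refine (norm_integral_le_integral_norm _).trans (le_of_eq ?_)
  congr 1; ext x; rw [norm_mul, exp_unimod, one_mul]

lemma U_undef {φ : ℝ → ℂ} (h : ¬ Integrable φ) (t x : ℝ) : U φ t x = 0 := by
  unfold U
  apply integral_undef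
  intro h'
  exact h (unimod_integrable (by unfold ph; fun_prop) (fun ξ => ph_norm t x ξ) h')

lemma rpow_near (β : ℝ) (h1 : -1 < β) :
    ∫⁻ ξ in Icc (-1 : ℝ) 1, ENNReal.ofReal (|ξ| ^ β) < ∞ := by
  set f : ℝ → ℝ≥0∞ := (Iic (1:ℝ)).indicator (fun x => ENNReal.ofReal (x ^ β)) with hf
  calc ∫⁻ ξ in Icc (-1 : ℝ) 1, ENNReal.ofReal (|ξ| ^ β) ≤ ∫⁻ ξ, f |ξ| := by
        rw [← lintegral_indicator measurableSet_Icc]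
        apply lintegral_mono; intro ξ
        simp only
        by_cases h : ξ ∈ Icc (-1 : ℝ) 1
        · have h' : |ξ| ∈ Iic (1:ℝ) := abs_le.2 h
          rw [indicator_of_mem h, hf, indicator_of_mem h']
        · rw [indicator_of_notMem h]; exact zero_le
    _ ≤ 2 * ∫⁻ x in Ioi (0:ℝ), f x := lintegral_abs_le f
    _ < ∞ := by
        apply ENNReal.mul_lt_top (by norm_num)
        rw [hf, lintegral_indicator measurableSet_Iic, Measure.restrict_restrict measurableSet_Iic,
          inter_comm, Ioi_inter_Iic]
        have := intervalIntegral.intervalIntegrable_rpow' (a := 0) (b := 1) h1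
        rw [intervalIntegrable_iff_integrableOn_Ioc_of_le (by norm_num)] at this
        refine lt_of_le_of_lt ?_ this.2
        apply lintegral_mono; intro x
        exact Real.ofReal_le_enorm _

lemma weight_int {φ : ℝ → ℂ} (hc : Continuous φ) (hi : Integrable φ) (M : ℝ) (hM : ∀ ξ, ‖φ ξ‖ ≤ M)
    (β : ℝ) (h1 : -1 < β) (h0 : β ≤ 0) : Integrable fun ξ => |ξ| ^ β * ‖φ ξ‖ := by
  have hM0 : 0 ≤ M := (norm_nonneg _).trans (hM 0)
  have hnear : Integrable ((Icc (-1:ℝ) 1).indicator fun ξ : ℝ => |ξ| ^ β) := by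
    apply IntegrableOn.integrable_indicator _ measurableSet_Icc
    refine ⟨Measurable.aestronglyMeasurable (by fun_prop), ?_⟩
    refine lt_of_le_of_lt (le_of_eq ?_) (rpow_near β h1)
    congr 1; ext ξ
    rw [Real.enorm_eq_ofReal (by positivity)]
  refine ((hnear.const_mul M).add hi.norm).mono' ?_ ?_
  · exact Measurable.aestronglyMeasurable (by fun_prop)
  · filter_upwards with ξ
    rw [Real.norm_of_nonneg (by positivity)]
    simp only [Pi.add_apply]
    by_cases h : ξ ∈ Icc (-1:ℝ) 1
    · rw [indicator_of_mem h]
      have : |ξ| ^ β * ‖φ ξ‖ ≤ |ξ| ^ β * M := by gcongr; exact hM ξ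
      have := norm_nonneg (φ ξ)
      linarith
    · rw [indicator_of_notMem h]
      have : 1 ≤ |ξ| := by
        by_contra h'
        exact h (abs_le.1 (not_le.1 h').le)
      have := Real.rpow_le_one_of_one_le_of_nonpos this h0
      nlinarith [norm_nonneg (φ ξ)]

lemma weight_mem {φ : ℝ → ℂ} (hc : Continuous φ) (hi : Integrable φ) (M : ℝ) (hM : ∀ ξ, ‖φ ξ‖ ≤ M)
    (α : ℝ) (h1 : -(1/4) ≤ α) (h0 : α ≤ 0) :
    Integrable (fun ξ => ((|ξ| ^ α : ℝ) : ℂ) * φ ξ) ∧ MemLp (fun ξ => ((|ξ| ^ α : ℝ) : ℂ) * φ ξ) 2 := by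
  have hM0 : 0 ≤ M := (norm_nonneg _).trans (hM 0)
  have hm : AEStronglyMeasurable (fun ξ => ((|ξ| ^ α : ℝ) : ℂ) * φ ξ) volume :=
    Measurable.aestronglyMeasurable (by fun_prop)
  have hnorm : ∀ ξ, ‖((|ξ| ^ α : ℝ) : ℂ) * φ ξ‖ = |ξ| ^ α * ‖φ ξ‖ := by
    intro ξ
    rw [norm_mul, Complex.norm_real, Real.norm_of_nonneg (by positivity)]
  constructor
  · refine (weight_int hc hi M hM α (by linarith) h0).mono' hm ?_
    filter_upwards with ξ
    rw [hnorm]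
  · rw [memLp_two_iff_integrable_sq_norm hm]
    refine ((weight_int hc hi M hM (2 * α) (by linarith) (by linarith)).const_mul M).mono' ?_ ?_
    · exact (hm.norm.pow 2)
    · filter_upwards with ξ
      rw [hnorm, Real.norm_of_nonneg (by positivity), mul_pow, ← Real.rpow_natCast (|ξ| ^ α),
        ← Real.rpow_mul (abs_nonneg _)]
      push_cast
      rw [mul_comm α 2]
      have : ‖φ ξ‖ ^ 2 ≤ M * ‖φ ξ‖ := by
        rw [sq]; gcongr; exact hM ξ
      calc _ ≤ |ξ| ^ (2 * α) * (M * ‖φ ξ‖) := by gcongr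
        _ = _ := by ring

/-- The weighted `L²` norm on the frequency side. -/
def wn (α : ℝ) (φ : ℝ → ℂ) : ℝ≥0∞ := eLpNorm (fun ξ => ((|ξ| ^ α : ℝ) : ℂ) * φ ξ) 2 volume

lemma wn_sq (α : ℝ) (φ : ℝ → ℂ) :
    wn α φ ^ 2 = ∫⁻ ξ, ‖φ ξ‖ₑ ^ 2 * ENNReal.ofReal (|ξ| ^ (2 * α)) := by
  rw [wn, eLpNorm_two_sq]
  congr 1; ext ξ
  rw [enorm_mul, mul_pow, mul_comm]
  congr 1
  rw [← ofReal_norm, Complex.norm_real, Real.norm_of_nonneg (by positivity),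
    ← ENNReal.ofReal_pow (by positivity), ← Real.rpow_natCast, ← Real.rpow_mul (abs_nonneg _)]
  congr 2; push_cast; ring

lemma toReal_enorm_le (x : ℝ≥0∞) : ‖x.toReal‖ₑ ≤ x := by
  rw [Real.enorm_eq_ofReal ENNReal.toReal_nonneg]
  exact ENNReal.ofReal_toReal_le

lemma Lqt_le_lin (q r : ℝ≥0∞) (u : ℝ → ℝ → ℂ) (h0 : q ≠ 0) (h1 : q ≠ ∞) :
    LqtLrx q r u ≤ (∫⁻ t, eLpNorm (u t) r volume ^ q.toReal) ^ (1 / q.toReal) := by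
  unfold LqtLrx
  rw [eLpNorm_eq_lintegral_rpow_enorm_toReal h0 h1]
  gcongr
  exact toReal_enorm_le _

lemma smul_le (φ : ℝ → ℂ) (t : ℝ) (r : ℝ≥0∞) :
    eLpNorm (fun x => (2 * Real.pi)⁻¹ • U φ t x) r volume ≤ eLpNorm (U φ t) r volume := by
  apply eLpNorm_mono
  intro x
  rw [norm_smul, Real.norm_of_nonneg (by positivity)]
  have : (2 * Real.pi)⁻¹ ≤ 1 := by
    apply inv_le_one_of_one_le₀
    nlinarith [Real.pi_gt_three]
  nlinarith [norm_nonneg (U φ t x)]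

lemma case_four : ∃ C : ℝ≥0∞, C ≠ ∞ ∧ ∀ φ : ℝ → ℂ, Integrable φ → MemLp φ 2 →
    LqtLrx 4 ∞ (fun t x => (2 * Real.pi)⁻¹ • U φ t x) ≤ C * wn (-(1/4)) φ := by
  refine ⟨640, by norm_num, fun φ h1 _ => ?_⟩
  have hW : W φ = wn (-(1/4)) φ ^ 2 := by
    rw [wn_sq, W]; norm_num
  calc _ ≤ (∫⁻ t, eLpNorm (fun x => (2 * Real.pi)⁻¹ • U φ t x) ∞ volume ^ (4 : ℝ≥0∞).toReal) ^ (1 / (4 : ℝ≥0∞).toReal) :=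
        Lqt_le_lin 4 ∞ _ (by norm_num) (by norm_num)
    _ ≤ (∫⁻ t, B φ t ^ 4) ^ (1/4 : ℝ) := by
        have e : (4 : ℝ≥0∞).toReal = 4 := by norm_num
        rw [e]
        apply ENNReal.rpow_le_rpow _ (by norm_num)
        apply lintegral_mono; intro t
        simp only
        rw [← ENNReal.rpow_natCast]
        push_cast
        apply ENNReal.rpow_le_rpow _ (by norm_num)
        refine (smul_le φ t ∞).trans ?_
        rw [eLpNorm_exponent_top]
        apply eLpNormEssSup_le_of_ae_enorm_bound
        filter_upwards with x
        exact le_B φ t x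
    _ ≤ (640 ^ 2 * W φ ^ 2) ^ (1/4 : ℝ) := by
        gcongr; exact endpoint h1
    _ ≤ (640 ^ 4 * W φ ^ 2) ^ (1/4 : ℝ) := by
        apply ENNReal.rpow_le_rpow _ (by norm_num)
        exact mul_le_mul' (by norm_num) le_rfl
    _ = ((640 * wn (-(1/4)) φ) ^ (4 : ℝ)) ^ (1/4 : ℝ) := by
        rw [hW]; congr 1
        rw [show (4:ℝ) = ((4:ℕ):ℝ) by norm_num, ENNReal.rpow_natCast]; ring
    _ = _ := by rw [← ENNReal.rpow_mul]; norm_num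

lemma case_top : ∃ C : ℝ≥0∞, C ≠ ∞ ∧ ∀ φ : ℝ → ℂ, Integrable φ → MemLp φ 2 →
    LqtLrx ∞ 2 (fun t x => (2 * Real.pi)⁻¹ • U φ t x) ≤ C * wn 0 φ := by
  refine ⟨ENNReal.ofReal (2 * Real.pi), ENNReal.ofReal_ne_top, fun φ h1 h2 => ?_⟩
  unfold LqtLrx
  rw [eLpNorm_exponent_top]
  apply eLpNormEssSup_le_of_ae_enorm_bound
  filter_upwards with t
  have e : wn 0 φ = eLpNorm φ 2 volume := by unfold wn; simp
  rw [e]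
  exact (toReal_enorm_le _).trans ((smul_le φ t 2).trans (U_L2 h1 h2 t))

lemma case_mid (Q : ℝ) (hQ : 4 < Q) : ∃ C : ℝ≥0∞, C ≠ ∞ ∧ ∀ φ : ℝ → ℂ, Integrable φ → MemLp φ 2 →
    LqtLrx (ENNReal.ofReal Q) (ENNReal.ofReal (2 * Q / (Q - 4))) (fun t x => (2 * Real.pi)⁻¹ • U φ t x)
      ≤ C * wn (-(1/Q)) φ := by
  obtain ⟨C, hC, h⟩ := strich_mid Q hQ
  have hQ4 : 0 < Q - 4 := by linarith
  have hQ0 : 0 < Q := by linarith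
  have hR : 0 < 2 * Q / (Q - 4) := by positivity
  refine ⟨C ^ (1/2 : ℝ), by simp [hC], fun φ h1 h2 => ?_⟩
  have hw := wn_sq (-(1/Q)) φ
  rw [show 2 * (-(1/Q)) = -(2/Q) by ring] at hw
  have hmain := h φ h1 h2
  rw [← hw] at hmain
  have hl := Lqt_le_lin (ENNReal.ofReal Q) (ENNReal.ofReal (2 * Q / (Q - 4)))
    (fun t x => (2 * Real.pi)⁻¹ • U φ t x) (by simp [hQ0]) (by simp)
  rw [ENNReal.toReal_ofReal hQ0.le] at hl
  refine hl.trans ?_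
  calc _ ≤ (∫⁻ t, (∫⁻ x, ‖U φ t x‖ₑ ^ (2 * Q / (Q - 4))) ^ ((Q - 4) / 2)) ^ (1 / Q) := by
        apply ENNReal.rpow_le_rpow _ (by positivity)
        apply lintegral_mono; intro t
        simp only
        have e := eLpNorm_eq_lintegral_rpow_enorm_toReal (μ := volume) (f := U φ t)
          (p := ENNReal.ofReal (2 * Q / (Q - 4))) (by simp [hR]) (by simp)
        rw [ENNReal.toReal_ofReal hR.le] at e
        calc _ ≤ eLpNorm (U φ t) (ENNReal.ofReal (2 * Q / (Q - 4))) volume ^ Q :=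
              ENNReal.rpow_le_rpow (smul_le φ t _) hQ0.le
          _ = _ := by
              rw [e, ← ENNReal.rpow_mul]; congr 1; field_simp
    _ = ((∫⁻ t, (∫⁻ x, ‖U φ t x‖ₑ ^ (2 * Q / (Q - 4))) ^ ((Q - 4) / 2)) ^ (2 / Q)) ^ (1/2 : ℝ) := by
        rw [← ENNReal.rpow_mul]; congr 1; field_simp
    _ ≤ (C * wn (-(1/Q)) φ ^ 2) ^ (1/2 : ℝ) := ENNReal.rpow_le_rpow hmain (by norm_num)
    _ = _ := by
        rw [ENNReal.mul_rpow_of_nonneg _ _ (by norm_num), ← ENNReal.rpow_natCast (wn _ _), ← ENNReal.rpow_mul]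
        norm_num

lemma all_cases (q r : ℝ≥0∞) (hqr : 2 / q + 1 / r = 1 / 2) (hq : 4 ≤ q) :
    ∃ C : ℝ≥0∞, C ≠ ∞ ∧ ∀ φ : ℝ → ℂ, Integrable φ → MemLp φ 2 →
    LqtLrx q r (fun t x => (2 * Real.pi)⁻¹ • U φ t x) ≤ C * wn (-(1 / q).toReal) φ := by
  rcases eq_or_ne q ∞ with rfl | hqt
  · have hr : r = 2 := by
      simp only [ENNReal.div_top, zero_add, one_div] at hqr
      exact inv_injective hqr
    subst hr
    simpa using case_top
  · rcases eq_or_lt_of_le hq with rfl | hq4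
    · have hr : r = ∞ := by
        have e : (2 : ℝ≥0∞) / 4 = 1 / 2 := by
          rw [show (4 : ℝ≥0∞) = 2 * 2 by norm_num, ENNReal.div_eq_inv_mul, ENNReal.mul_inv (by norm_num) (by norm_num),
            mul_assoc, ENNReal.inv_mul_cancel (by norm_num) (by norm_num), mul_one, one_div]
        rw [e] at hqr
        have h2 : (1 / 2 : ℝ≥0∞) ≠ ∞ := by norm_num
        have : 1 / r = 0 := by
          rw [← ENNReal.add_right_inj h2, hqr, add_zero]
        simpa using this
      subst hr
      have e : (1 / 4 : ℝ≥0∞).toReal = 1 / 4 := by simp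
      rw [e]
      exact case_four
    · obtain ⟨Q, hQ⟩ : ∃ Q, Q = q.toReal := ⟨_, rfl⟩
      have hqQ : q = ENNReal.ofReal Q := by rw [hQ, ENNReal.ofReal_toReal hqt]
      have hQ4 : 4 < Q := by
        rw [hqQ, show (4 : ℝ≥0∞) = ENNReal.ofReal 4 by norm_num, ENNReal.ofReal_lt_ofReal_iff_of_nonneg (by norm_num)] at hq4
        exact hq4
      have hQ0 : 0 < Q := by linarith
      have hQ4' : 0 < Q - 4 := by linarith
      have e2 : 2 / q = ENNReal.ofReal (2 / Q) := by
        rw [hqQ, ENNReal.ofReal_div_of_pos hQ0]; norm_num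
      have hr : r = ENNReal.ofReal (2 * Q / (Q - 4)) := by
        apply inv_injective
        rw [← ENNReal.ofReal_inv_of_pos (by positivity), inv_div]
        rw [e2, one_div] at hqr
        rw [← ENNReal.add_right_inj (a := ENNReal.ofReal (2 / Q)) (by simp), hqr,
          ← ENNReal.ofReal_add (by positivity) (by positivity)]
        rw [show 2 / Q + (Q - 4) / (2 * Q) = 1 / 2 by field_simp; ring]
        rw [ENNReal.ofReal_div_of_pos (by norm_num)]; norm_num
      have e3 : (1 / q).toReal = 1 / Q := by rw [ENNReal.toReal_div, hQ]; simp
      rw [e3, hr, hqQ]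
      exact case_mid Q hQ4


/-- Strichartz estimates for the Airy equation.
Let `(q,r)` be a Strichartz pair, i.e. `2/q + 1/r = 1/2` with `4 ≤ q ≤ ∞`. Then
every solution of the Airy equation with initial data `u₀` satisfies
`‖u‖_{L^q_t L^r_x} ≲ ‖|D|^{-1/q} u₀‖_{L²}`. -/
theorem airy_strichartz (q r : ℝ≥0∞) (hqr : 2 / q + 1 / r = 1 / 2) (hq : 4 ≤ q) :
    ∃ C : ℝ, 0 < C ∧ ∀ u₀ : ℝ → ℂ,
      LqtLrx q r (airySol u₀) ≤
        ENNReal.ofReal C * L2x (absD (-(1 / q).toReal) u₀) := by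
  obtain ⟨C, hC, h⟩ := all_cases q r hqr hq
  refine ⟨10 * C.toReal + 1, by positivity, fun u₀ => ?_⟩
  have hsol : airySol u₀ = fun t x => (2 * Real.pi)⁻¹ • U (ftx u₀) t x := by
    ext t x; exact airySol_eq u₀ t x
  rw [hsol]
  have hq0 : q ≠ 0 := by
    rintro rfl
    simp at hq
  by_cases hi : Integrable (ftx u₀)
  · have hc := ftx_cont u₀
    have hb := ftx_bdd u₀
    have hα0 : -(1 / q).toReal ≤ 0 := neg_nonpos.2 ENNReal.toReal_nonneg
    have hα1 : -(1 / 4) ≤ -(1 / q).toReal := by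
      have : (1 / q).toReal ≤ (1 / 4 : ℝ≥0∞).toReal := by
        apply ENNReal.toReal_mono (by simp)
        gcongr
      have e : (1 / 4 : ℝ≥0∞).toReal = 1 / 4 := by simp
      rw [e] at this
      linarith
    have h2 : MemLp (ftx u₀) 2 := by
      have := (weight_mem hc hi _ hb 0 (by norm_num) le_rfl).2
      simpa using this
    have hw := weight_mem hc hi _ hb _ hα1 hα0
    have hpl := plancherel _ hw.1 hw.2
    have hL : L2x (absD (-(1 / q).toReal) u₀) =
        ENNReal.ofReal ((2 * Real.pi) ^ (-(1/2) : ℝ)) * wn (-(1 / q).toReal) (ftx u₀) := hpl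
    have h10 : 1 ≤ 10 * ENNReal.ofReal ((2 * Real.pi) ^ (-(1/2) : ℝ)) := by
      rw [show (10 : ℝ≥0∞) = ENNReal.ofReal 10 by norm_num, ← ENNReal.ofReal_mul (by norm_num),
        ← ENNReal.ofReal_one]
      apply ENNReal.ofReal_le_ofReal
      have hpi : (2 * Real.pi) ≤ 100 := by linarith [Real.pi_lt_four]
      have hp0 : (0:ℝ) < 2 * Real.pi := by positivity
      have : (100:ℝ) ^ (-(1/2) : ℝ) ≤ (2 * Real.pi) ^ (-(1/2) : ℝ) :=
        Real.rpow_le_rpow_of_nonpos hp0 hpi (by norm_num)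
      have e : (100:ℝ) ^ (-(1/2) : ℝ) = 1 / 10 := by
        rw [show (100:ℝ) = 10 ^ (2:ℝ) by norm_num, ← Real.rpow_mul (by norm_num)]
        norm_num
      linarith
    calc _ ≤ C * wn (-(1 / q).toReal) (ftx u₀) := h _ hi h2
      _ ≤ C * ((10 * ENNReal.ofReal ((2 * Real.pi) ^ (-(1/2) : ℝ))) * wn (-(1 / q).toReal) (ftx u₀)) := by
          gcongr
          exact le_mul_of_one_le_left zero_le h10
      _ = (10 * C) * L2x (absD (-(1 / q).toReal) u₀) := by rw [hL]; ring
      _ ≤ _ := by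
          gcongr
          calc 10 * C = ENNReal.ofReal (10 * C.toReal) := by
                rw [ENNReal.ofReal_mul (by norm_num), ENNReal.ofReal_toReal hC]; norm_num
            _ ≤ _ := ENNReal.ofReal_le_ofReal (by linarith)
  · have e : LqtLrx q r (fun t x => (2 * Real.pi)⁻¹ • U (ftx u₀) t x) = 0 := by
      unfold LqtLrx
      simp [U_undef hi]
    rw [e]
    exact zero_le

end KdVPaper
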